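/- arXiv:2503.11354 — 8 statements merged into one kernel-verified Lean document; each statement's English description precedes it below -/
import Mathlib

section
/- For every c > 0, ∫_ℝ e^{-c t²} / √(1 + 2t²) dt = (1/√2) · e^{c/4} · ∫_0^∞ e^{-(c/4)·cosh(s)} ds. -/
open Real MeasureTheory

theorem kernel_closed_form (c : ℝ) (hc : 0 < c) :
    ∫ t : ℝ, Real.exp (-c * t ^ 2) / Real.sqrt (1 + 2 * t ^ 2)
      = (1 / Real.sqrt 2) * Real.exp (c / 4) *
          ∫ s in Set.Ioi (0 : ℝ), Real.exp (-(c / 4) * Real.cosh s) := by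
  have h2 : (0:ℝ) < Real.sqrt 2 := by positivity
  have hsq : Real.sqrt 2 ^ 2 = 2 := Real.sq_sqrt (by norm_num)
  have hd : ∀ x ∈ (Set.univ : Set ℝ), HasDerivWithinAt (fun s : ℝ => Real.sinh (s / 2) / Real.sqrt 2)
      (Real.cosh (x / 2) * (1 / 2) / Real.sqrt 2) Set.univ x := by
    intro x _
    exact ((((hasDerivAt_id x).div_const 2).sinh).div_const _).hasDerivWithinAt
  have hinj : Set.InjOn (fun s : ℝ => Real.sinh (s / 2) / Real.sqrt 2) Set.univ := by
    intro x _ y _ h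
    have h' : Real.sinh (x / 2) = Real.sinh (y / 2) := (div_left_inj' h2.ne').1 h
    have := Real.sinh_injective h'
    linarith
  have himg : (fun s : ℝ => Real.sinh (s / 2) / Real.sqrt 2) '' Set.univ = Set.univ := by
    rw [Set.image_univ, Set.range_eq_univ]
    intro y
    refine ⟨2 * Real.arsinh (y * Real.sqrt 2), ?_⟩
    simp only [mul_div_cancel_left₀ _ (two_ne_zero' ℝ), Real.sinh_arsinh]
    field_simp
  have key := integral_image_eq_integral_abs_deriv_smul MeasurableSet.univ hd hinj
    (fun t : ℝ => Real.exp (-c * t ^ 2) / Real.sqrt (1 + 2 * t ^ 2))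
  rw [himg, setIntegral_univ, setIntegral_univ] at key
  rw [key]
  have hfun : (fun x : ℝ => |Real.cosh (x / 2) * (1 / 2) / Real.sqrt 2| •
      (Real.exp (-c * (Real.sinh (x / 2) / Real.sqrt 2) ^ 2) /
        Real.sqrt (1 + 2 * (Real.sinh (x / 2) / Real.sqrt 2) ^ 2))) =
      fun x : ℝ => (1 / (2 * Real.sqrt 2) * Real.exp (c / 4)) *
        Real.exp (-(c / 4) * Real.cosh |x|) := by
    funext x
    have hp := Real.cosh_pos (x / 2)
    have e0 := Real.cosh_sq (x / 2)
    have e1 : 1 + 2 * (Real.sinh (x / 2) / Real.sqrt 2) ^ 2 = Real.cosh (x / 2) ^ 2 := by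
      rw [div_pow, hsq, e0]; ring
    have e2 : Real.cosh x = Real.cosh (x / 2) ^ 2 + Real.sinh (x / 2) ^ 2 := by
      rw [← Real.cosh_two_mul]; congr 1; ring
    rw [e1, Real.sqrt_sq hp.le, abs_of_pos (by positivity), Real.cosh_abs, mul_assoc,
      ← Real.exp_add, smul_eq_mul]
    have e3 : c / 4 + -(c / 4) * Real.cosh x = -c * (Real.sinh (x / 2) / Real.sqrt 2) ^ 2 := by
      rw [div_pow, hsq, e2, e0]; ring
    rw [e3]
    field_simp
  rw [hfun, integral_const_mul,
    integral_comp_abs (f := fun s => Real.exp (-(c / 4) * Real.cosh s))]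
  field_simp
end

section
/- lim_{c → 0⁺} (∫_0^∞ e^{-c t²} / √(1 + 2t²) dt) / log(1/c) = 1/(2√2). -/
open Real MeasureTheory Filter Topology

lemma hasDerivAt_F (t : ℝ) :
    HasDerivAt (fun t : ℝ => Real.arsinh (Real.sqrt 2 * t) / Real.sqrt 2)
      (1 / Real.sqrt (1 + 2 * t ^ 2)) t := by
  have h := ((((hasDerivAt_id t).const_mul (Real.sqrt 2))).arsinh).div_const (Real.sqrt 2)
  have h2 : Real.sqrt 2 ≠ 0 := by positivity
  have h3 : Real.sqrt (1 + 2 * t ^ 2) ≠ 0 := by positivity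
  refine h.congr_deriv ?_
  simp only [id, mul_pow, smul_eq_mul, Real.sq_sqrt (show (0:ℝ) ≤ 2 by norm_num)]
  field_simp

lemma cont_f : Continuous (fun t : ℝ => 1 / Real.sqrt (1 + 2 * t ^ 2)) := by
  apply Continuous.div continuous_const (by fun_prop)
  intro t; positivity

lemma int_f (T : ℝ) (hT : 0 ≤ T) : ∫ t in Set.Ioc 0 T, 1 / Real.sqrt (1 + 2 * t ^ 2)
    = Real.arsinh (Real.sqrt 2 * T) / Real.sqrt 2 := by
  rw [← intervalIntegral.integral_of_le hT,
    intervalIntegral.integral_eq_sub_of_hasDerivAt (fun t _ => hasDerivAt_F t)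
      (cont_f.intervalIntegrable _ _)]
  simp

lemma int_lin (c T : ℝ) (hT : 0 ≤ T) : ∫ t in Set.Ioc 0 T, c * t = c * T ^ 2 / 2 := by
  rw [← intervalIntegral.integral_of_le hT, intervalIntegral.integral_const_mul, integral_id]
  ring

lemma int_gauss (c : ℝ) (hc : 0 < c) :
    ∫ t in Set.Ioi (0 : ℝ), c * (t * Real.exp (-c * t ^ 2)) = 1 / 2 := by
  have h := integral_Ioi_of_hasDerivAt_of_tendsto' (a := (0:ℝ)) (m := 0)
    (f := fun t : ℝ => -(1/2) * Real.exp (-c * t ^ 2))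
    (f' := fun t : ℝ => c * (t * Real.exp (-c * t ^ 2))) ?_ ?_ ?_
  · rw [h]; simp
  · intro t _
    have := ((((hasDerivAt_id t).pow 2).const_mul (-c)).exp).const_mul (-(1/2):ℝ)
    refine this.congr_deriv ?_
    simp; ring
  · exact ((integrable_mul_exp_neg_mul_sq hc).const_mul c).integrableOn
  · have h1 : Tendsto (fun t : ℝ => -c * t ^ 2) atTop atBot :=
      (tendsto_pow_atTop two_ne_zero).const_mul_atTop_of_neg (by linarith)
    simpa using (Real.tendsto_exp_atBot.comp h1).const_mul (-(1/2):ℝ)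

lemma integrable_g (c : ℝ) (hc : 0 < c) :
    Integrable (fun t : ℝ => Real.exp (-c * t ^ 2) / Real.sqrt (1 + 2 * t ^ 2)) := by
  refine (integrable_exp_neg_mul_sq hc).mono' ?_ ?_
  · apply Continuous.aestronglyMeasurable
    apply Continuous.div (by fun_prop) (by fun_prop)
    intro t; positivity
  · refine Eventually.of_forall fun t => ?_
    rw [Real.norm_of_nonneg (by positivity)]
    apply div_le_self (by positivity)
    rw [Real.one_le_sqrt]
    nlinarith [sq_nonneg t]

lemma le_sqrt_aux (t : ℝ) : t ≤ Real.sqrt (1 + 2 * t ^ 2) := by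
  apply Real.le_sqrt_of_sq_le; nlinarith [sq_nonneg t]

lemma lower (c T : ℝ) (hc : 0 < c) (hT : 0 < T) (h : c * T ^ 2 = 1) :
    Real.arsinh (Real.sqrt 2 * T) / Real.sqrt 2 - 1 / 2 ≤
      ∫ t in Set.Ioi (0 : ℝ), Real.exp (-c * t ^ 2) / Real.sqrt (1 + 2 * t ^ 2) := by
  have i1 : IntegrableOn (fun t : ℝ => 1 / Real.sqrt (1 + 2 * t ^ 2)) (Set.Ioc 0 T) :=
    (cont_f.integrableOn_Icc).mono_set Set.Ioc_subset_Icc_self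
  have i2 : IntegrableOn (fun t : ℝ => c * t) (Set.Ioc 0 T) :=
    ((continuous_const.mul continuous_id).integrableOn_Icc).mono_set Set.Ioc_subset_Icc_self
  calc _ = ∫ t in Set.Ioc 0 T, (1 / Real.sqrt (1 + 2 * t ^ 2) - c * t) := by
        rw [integral_sub i1 i2, int_f T hT.le, int_lin c T hT.le, h]
    _ ≤ ∫ t in Set.Ioc 0 T, Real.exp (-c * t ^ 2) / Real.sqrt (1 + 2 * t ^ 2) := by
        refine setIntegral_mono_on (i1.sub i2) (integrable_g c hc).integrableOn
          measurableSet_Ioc ?_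
        intro t ht
        have hs : 0 < Real.sqrt (1 + 2 * t ^ 2) := by positivity
        have h1 := Real.add_one_le_exp (-c * t ^ 2)
        have h2 := le_sqrt_aux t
        rw [div_sub' hs.ne', div_le_div_iff_of_pos_right hs]
        have : c * t * t ≤ c * t * Real.sqrt (1 + 2 * t ^ 2) :=
          mul_le_mul_of_nonneg_left h2 (mul_nonneg hc.le ht.1.le)
        nlinarith
    _ ≤ _ := by
        refine setIntegral_mono_set (integrable_g c hc).integrableOn ?_ ?_
        · exact Eventually.of_forall fun t => by simp only [Pi.zero_apply]; positivity
        · exact (Set.Ioc_subset_Ioi_self).eventuallyLE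

lemma upper (c T : ℝ) (hc : 0 < c) (hT : 0 < T) (h : c * T ^ 2 = 1) :
    (∫ t in Set.Ioi (0 : ℝ), Real.exp (-c * t ^ 2) / Real.sqrt (1 + 2 * t ^ 2)) ≤
    Real.arsinh (Real.sqrt 2 * T) / Real.sqrt 2 + 1 / 2 := by
  have i1 : IntegrableOn (fun t : ℝ => 1 / Real.sqrt (1 + 2 * t ^ 2)) (Set.Ioc 0 T) :=
    (cont_f.integrableOn_Icc).mono_set Set.Ioc_subset_Icc_self
  have i3 : Integrable (fun t : ℝ => c * (t * Real.exp (-c * t ^ 2))) :=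
    (integrable_mul_exp_neg_mul_sq hc).const_mul c
  have ig := integrable_g c hc
  rw [← Set.Ioc_union_Ioi_eq_Ioi hT.le, setIntegral_union (Set.Ioc_disjoint_Ioi le_rfl)
    measurableSet_Ioi ig.integrableOn ig.integrableOn]
  apply add_le_add
  · rw [← int_f T hT.le]
    refine setIntegral_mono_on ig.integrableOn i1 measurableSet_Ioc ?_
    intro t ht
    gcongr
    rw [Real.exp_le_one_iff]
    nlinarith [mul_nonneg hc.le (sq_nonneg t)]
  · rw [← int_gauss c hc]
    calc _ ≤ ∫ t in Set.Ioi T, c * (t * Real.exp (-c * t ^ 2)) := by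
          refine setIntegral_mono_on ig.integrableOn i3.integrableOn measurableSet_Ioi ?_
          intro t ht
          have ht' : T < t := ht
          have ht0 : 0 < t := hT.trans ht'
          have hs : 0 < Real.sqrt (1 + 2 * t ^ 2) := by positivity
          have h2 := le_sqrt_aux t
          rw [div_le_iff₀ hs]
          have h3 : 1 ≤ c * t * t := by
            have : T ^ 2 ≤ t ^ 2 := by gcongr
            nlinarith
          have h4 : 1 ≤ c * t * Real.sqrt (1 + 2 * t ^ 2) := by
            refine h3.trans ?_
            gcongr
          nlinarith [Real.exp_pos (-c * t ^ 2)]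
      _ ≤ _ := by
        refine setIntegral_mono_set i3.integrableOn ?_ ?_
        · filter_upwards [ae_restrict_mem measurableSet_Ioi] with t ht
          have : 0 < t := ht
          simp only [Pi.zero_apply]; positivity
        · exact (Set.Ioi_subset_Ioi hT.le).eventuallyLE

lemma arsinh_bd (T : ℝ) (hT : 1 ≤ T) : Real.log T ≤ Real.arsinh (Real.sqrt 2 * T) ∧
    Real.arsinh (Real.sqrt 2 * T) ≤ Real.log T + Real.log 4 := by
  have h0 : 0 < T := by linarith
  have e : (Real.sqrt 2 * T) ^ 2 = 2 * T ^ 2 := by rw [mul_pow, Real.sq_sqrt (by norm_num)]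
  have h1 := le_sqrt_aux T
  have h2 : 0 ≤ Real.sqrt 2 * T := by positivity
  have h3 : Real.sqrt 2 * T ≤ 2 * T := by
    gcongr; rw [Real.sqrt_le_left (by norm_num)]; norm_num
  have h4 : Real.sqrt (1 + 2 * T ^ 2) ≤ 2 * T := by
    rw [Real.sqrt_le_left (by linarith)]; nlinarith
  rw [← Real.log_mul h0.ne' (by norm_num)]
  unfold Real.arsinh
  rw [e]
  constructor
  · apply Real.log_le_log h0; linarith
  · apply Real.log_le_log <;> linarith

theorem kernel_log_asymptotics :
    Tendsto
      (fun c : ℝ =>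
        (∫ t in Set.Ioi (0 : ℝ), Real.exp (-c * t ^ 2) / Real.sqrt (1 + 2 * t ^ 2)) /
          Real.log (1 / c))
      (𝓝[>] 0) (𝓝 (1 / (2 * Real.sqrt 2))) := by
  have hL : Tendsto (fun c : ℝ => Real.log (1 / c)) (𝓝[>] 0) atTop := by
    simp only [one_div]
    exact Real.tendsto_log_atTop.comp tendsto_inv_nhdsGT_zero
  have lim (K : ℝ) : Tendsto (fun c : ℝ => 1 / (2 * Real.sqrt 2) + K / Real.log (1 / c))
      (𝓝[>] 0) (𝓝 (1 / (2 * Real.sqrt 2))) := by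
    simpa using (hL.const_div_atTop K).const_add (1 / (2 * Real.sqrt 2))
  have ev : ∀ᶠ c : ℝ in 𝓝[>] 0, c ∈ Set.Ioo (0:ℝ) 1 := Ioo_mem_nhdsGT one_pos
  have key : ∀ c ∈ Set.Ioo (0:ℝ) 1, ∃ T : ℝ, 1 ≤ T ∧ c * T ^ 2 = 1 ∧
      Real.log T = Real.log (1 / c) / 2 ∧ 0 < Real.log (1 / c) := by
    rintro c ⟨h0, h1⟩
    refine ⟨Real.sqrt (1 / c), ?_, ?_, Real.log_sqrt (by positivity), ?_⟩
    · rw [Real.one_le_sqrt, one_div]; exact (one_le_inv₀ h0).2 h1.le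
    · rw [Real.sq_sqrt (by positivity)]; field_simp
    · apply Real.log_pos; rw [one_div]; exact (one_lt_inv₀ h0).2 h1
  have hs : 0 < Real.sqrt 2 := by positivity
  refine tendsto_of_tendsto_of_tendsto_of_le_of_le' (lim (-(1/2)))
    (lim (Real.log 4 / Real.sqrt 2 + 1 / 2)) ?_ ?_
  · filter_upwards [ev] with c hc
    obtain ⟨T, hT, hcT, hlog, hpos⟩ := key c hc
    have h1 := lower c T hc.1 (by linarith) hcT
    have h2 := (div_le_div_iff_of_pos_right hs).2 (arsinh_bd T hT).1
    rw [hlog] at h2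
    rw [le_div_iff₀ hpos, add_mul, div_mul_cancel₀ _ hpos.ne']
    have e : 1 / (2 * Real.sqrt 2) * Real.log (1 / c) = Real.log (1 / c) / 2 / Real.sqrt 2 := by
      field_simp
    rw [e]; linarith
  · filter_upwards [ev] with c hc
    obtain ⟨T, hT, hcT, hlog, hpos⟩ := key c hc
    have h1 := upper c T hc.1 (by linarith) hcT
    have h2 := (div_le_div_iff_of_pos_right hs).2 (arsinh_bd T hT).2
    rw [hlog, add_div] at h2
    rw [div_le_iff₀ hpos, add_mul, div_mul_cancel₀ _ hpos.ne']
    have e : 1 / (2 * Real.sqrt 2) * Real.log (1 / c) = Real.log (1 / c) / 2 / Real.sqrt 2 := by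
      field_simp
    rw [e]; linarith
end

section
/- For every β > 0 and all a, b ∈ ℝ², I_β(a,b) = ∫_ℝ √(π/(1 + 2t²)) · (β/(β + 2t²)) · e^{-(β t²/(β + 2t²))·|a - b|²} dt. -/
open Real MeasureTheory

/-- The normalized 2d Gaussian `δ_{a,β}` evaluated at `(x₁, x₂) ∈ ℝ²`. -/
noncomputable def deltaGauss2 (β : ℝ) (a : EuclideanSpace ℝ (Fin 2)) (x₁ x₂ : ℝ) : ℝ :=
  (β / π) * Real.exp (-β * ((x₁ - a 0) ^ 2 + (x₂ - a 1) ^ 2))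

/-- The six-dimensional Coulomb-kernel integral `I_β(a,b)` of Appendix A. -/
noncomputable def Ibeta (β : ℝ) (a b : EuclideanSpace ℝ (Fin 2)) : ℝ :=
  ∫ p : EuclideanSpace ℝ (Fin 3) × EuclideanSpace ℝ (Fin 3),
    deltaGauss2 β a (p.1 0) (p.1 1) * Real.exp (-(p.1 2) ^ 2) *
      (deltaGauss2 β b (p.2 0) (p.2 1) * Real.exp (-(p.2 2) ^ 2)) / ‖p.1 - p.2‖


lemma gauss_one (c s : ℝ) (hc : 0 < c) (hs : 0 ≤ s) (B x : ℝ) :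
    ∫ y : ℝ, exp (-(c * (y - B) ^ 2 + s * (y - x) ^ 2)) =
      √(π / (c + s)) * exp (-(c * s / (c + s)) * (x - B) ^ 2) := by
  have h : ∀ y : ℝ, exp (-(c * (y - B) ^ 2 + s * (y - x) ^ 2)) =
      exp (-(c + s) * (y - (c * B + s * x) / (c + s)) ^ 2) *
        exp (-(c * s / (c + s)) * (x - B) ^ 2) := by
    intro y
    rw [← Real.exp_add]
    congr 1
    have : c + s ≠ 0 := by positivity
    field_simp
    ring
  simp_rw [h]
  rw [integral_mul_const, integral_sub_right_eq_self (fun y => exp (-(c + s) * y ^ 2)),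
    integral_gaussian]

lemma gauss_two_int (c s : ℝ) (hc : 0 < c) (hs : 0 ≤ s) (A B : ℝ) :
    Integrable (fun p : ℝ × ℝ =>
      exp (-(c * (p.1 - A) ^ 2 + c * (p.2 - B) ^ 2 + s * (p.1 - p.2) ^ 2))) := by
  have h1 : ∀ A : ℝ, Integrable (fun x : ℝ => exp (-c * (x - A) ^ 2)) := fun A =>
    (integrable_exp_neg_mul_sq hc).comp_sub_right A
  have := (h1 A).mul_prod (h1 B)
  refine this.mono' (by fun_prop) (Filter.Eventually.of_forall fun p => ?_)
  rw [Real.norm_eq_abs, abs_of_pos (exp_pos _), ← Real.exp_add]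
  apply Real.exp_le_exp.2
  nlinarith [mul_nonneg hs (sq_nonneg (p.1 - p.2))]

lemma gauss_two (c s : ℝ) (hc : 0 < c) (hs : 0 ≤ s) (A B : ℝ) :
    ∫ p : ℝ × ℝ, exp (-(c * (p.1 - A) ^ 2 + c * (p.2 - B) ^ 2 + s * (p.1 - p.2) ^ 2)) =
      π / √(c * (c + 2 * s)) * exp (-(c * s / (c + 2 * s)) * (A - B) ^ 2) := by
  rw [Measure.volume_eq_prod, integral_prod _ (gauss_two_int c s hc hs A B)]
  have h : ∀ x y : ℝ, exp (-(c * (x - A) ^ 2 + c * (y - B) ^ 2 + s * (x - y) ^ 2)) =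
      exp (-(c * (x - A) ^ 2)) * exp (-(c * (y - B) ^ 2 + s * (y - x) ^ 2)) := by
    intro x y
    rw [← Real.exp_add]
    congr 1
    ring
  simp_rw [h, integral_const_mul, gauss_one c s hc hs]
  have h2 : ∀ x : ℝ, exp (-(c * (x - A) ^ 2)) *
      (√(π / (c + s)) * exp (-(c * s / (c + s)) * (x - B) ^ 2)) =
      √(π / (c + s)) * exp (-(c * (x - A) ^ 2 + (c * s / (c + s)) * (x - B) ^ 2)) := by
    intro x
    rw [mul_left_comm, ← Real.exp_add]
    congr 2
    ring
  have hcs : 0 < c + s := by positivity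
  have hcs2 : 0 < c + 2 * s := by positivity
  simp_rw [h2, integral_const_mul, gauss_one c (c * s / (c + s)) hc (by positivity)]
  rw [← mul_assoc, ← Real.sqrt_mul (by positivity)]
  have e1 : π / (c + s) * (π / (c + c * s / (c + s))) = π ^ 2 / (c * (c + 2 * s)) := by
    field_simp
    ring
  have e2 : c * (c * s / (c + s)) / (c + c * s / (c + s)) = c * s / (c + 2 * s) := by
    field_simp
    ring
  rw [e1, e2, Real.sqrt_div (by positivity), Real.sqrt_sq pi_pos.le]
  congr 2
  ring

abbrev E3 := EuclideanSpace ℝ (Fin 3)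

noncomputable def pairEquiv : (E3 × E3) ≃ᵐ (Fin 3 → ℝ × ℝ) :=
  ((MeasurableEquiv.toLp 2 (Fin 3 → ℝ)).symm.prodCongr
    (MeasurableEquiv.toLp 2 (Fin 3 → ℝ)).symm).trans
    (MeasurableEquiv.arrowProdEquivProdArrow ℝ ℝ (Fin 3)).symm

lemma pairEquiv_mp : MeasurePreserving pairEquiv := by
  refine MeasurePreserving.trans (e := (MeasurableEquiv.toLp 2 (Fin 3 → ℝ)).symm.prodCongr
    (MeasurableEquiv.toLp 2 (Fin 3 → ℝ)).symm) (μb := volume) ?_ ?_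
  · exact (EuclideanSpace.volume_preserving_symm_measurableEquiv_toLp (Fin 3)).prod
      (EuclideanSpace.volume_preserving_symm_measurableEquiv_toLp (Fin 3))
  · exact (volume_measurePreserving_arrowProdEquivProdArrow ℝ ℝ (Fin 3)).symm

lemma pairEquiv_apply (p : E3 × E3) (i : Fin 3) : pairEquiv p i = (p.1 i, p.2 i) := rfl

/-- The Gaussian one-pair factor. -/
noncomputable def gfac (c s A B : ℝ) (p : ℝ × ℝ) : ℝ :=
  exp (-(c * (p.1 - A) ^ 2 + c * (p.2 - B) ^ 2 + s * (p.1 - p.2) ^ 2))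

noncomputable def Gt (β : ℝ) (a b : EuclideanSpace ℝ (Fin 2)) (p : E3 × E3) (t : ℝ) : ℝ :=
  deltaGauss2 β a (p.1 0) (p.1 1) * Real.exp (-(p.1 2) ^ 2) *
      (deltaGauss2 β b (p.2 0) (p.2 1) * Real.exp (-(p.2 2) ^ 2)) *
      ((√π)⁻¹ * exp (-t ^ 2 * ‖p.1 - p.2‖ ^ 2))

lemma Gt_eq (β : ℝ) (a b : EuclideanSpace ℝ (Fin 2)) (p : E3 × E3) (t : ℝ) :
    Gt β a b p t = (β / π) ^ 2 * (√π)⁻¹ *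
      ∏ i : Fin 3, gfac (![β, β, 1] i) (t ^ 2) (![a 0, a 1, 0] i) (![b 0, b 1, 0] i)
        (pairEquiv p i) := by
  simp only [Gt, deltaGauss2, Fin.prod_univ_three, pairEquiv_apply, gfac,
    EuclideanSpace.norm_sq_eq, Fin.sum_univ_three, Matrix.cons_val]
  simp only [Real.norm_eq_abs, sq_abs, PiLp.sub_apply]
  have h : ∀ u v w z k : ℝ, β / π * exp u * exp v * (β / π * exp w * exp z) *
      ((√π)⁻¹ * exp k) = (β / π) ^ 2 * (√π)⁻¹ * exp (u + v + w + z + k) := by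
    intro u v w z k
    simp only [Real.exp_add]
    ring
  rw [h, ← Real.exp_add, ← Real.exp_add]
  congr 2
  ring

lemma Gt_integrable (β : ℝ) (hβ : 0 < β) (a b : EuclideanSpace ℝ (Fin 2)) (t : ℝ) :
    Integrable (fun p => Gt β a b p t) := by
  simp_rw [Gt_eq]
  refine Integrable.const_mul ?_ _
  refine pairEquiv_mp.integrable_comp_of_integrable (g := fun q : Fin 3 → ℝ × ℝ =>
    ∏ i : Fin 3, gfac (![β, β, 1] i) (t ^ 2) (![a 0, a 1, 0] i) (![b 0, b 1, 0] i) (q i)) ?_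
  refine Integrable.fintype_prod (f := fun i => gfac (![β, β, 1] i) (t ^ 2) (![a 0, a 1, 0] i)
    (![b 0, b 1, 0] i)) fun i => ?_
  apply gauss_two_int _ _ _ (sq_nonneg t)
  fin_cases i <;> simp [hβ]

lemma Gt_integral (β : ℝ) (hβ : 0 < β) (a b : EuclideanSpace ℝ (Fin 2)) (t : ℝ) :
    ∫ p, Gt β a b p t = Real.sqrt (π / (1 + 2 * t ^ 2)) * (β / (β + 2 * t ^ 2)) *
        Real.exp (-(β * t ^ 2 / (β + 2 * t ^ 2)) * ‖a - b‖ ^ 2) := by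
  simp_rw [Gt_eq]
  rw [integral_const_mul, pairEquiv_mp.integral_comp' (g := fun q : Fin 3 → ℝ × ℝ =>
    ∏ i : Fin 3, gfac (![β, β, 1] i) (t ^ 2) (![a 0, a 1, 0] i) (![b 0, b 1, 0] i) (q i)),
    integral_fintype_prod_volume_eq_prod (fun i : Fin 3 => gfac (![β, β, 1] i) (t ^ 2)
      (![a 0, a 1, 0] i) (![b 0, b 1, 0] i))]
  simp only [Fin.prod_univ_three, Matrix.cons_val, gfac]
  rw [gauss_two β _ hβ (sq_nonneg t), gauss_two β _ hβ (sq_nonneg t),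
    gauss_two 1 _ one_pos (sq_nonneg t), EuclideanSpace.norm_sq_eq]
  simp only [Fin.sum_univ_two, Real.norm_eq_abs, sq_abs, PiLp.sub_apply, mul_add, Real.exp_add]
  have h1 : √(β * (β + 2 * t ^ 2)) * √(β * (β + 2 * t ^ 2)) = β * (β + 2 * t ^ 2) :=
    Real.mul_self_sqrt (by positivity)
  have h2 : √π * √π = π := Real.mul_self_sqrt pi_pos.le
  rw [Real.sqrt_div pi_pos.le]
  have h3 : 0 < √(β * (β + 2 * t ^ 2)) := by positivity
  have h4 : 0 < √(1 + 2 * t ^ 2) := by positivity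
  have h5 : 0 < √π := by positivity
  have h6 : (β / π) ^ 2 * (√π)⁻¹ * (π / √(β * (β + 2 * t ^ 2)) * (π / √(β * (β + 2 * t ^ 2))) *
      (π / √(1 + 2 * t ^ 2))) = √π / √(1 + 2 * t ^ 2) * (β / (β + 2 * t ^ 2)) := by
    rw [div_mul_div_comm π _ π, h1]
    field_simp
    nlinarith
  rw [← h6]
  simp
  ring

lemma inv_norm_lintegral (r : ℝ) (hr : 0 < r) :
    ENNReal.ofReal (1 / r) = ∫⁻ t : ℝ, ENNReal.ofReal ((√π)⁻¹ * exp (-t ^ 2 * r ^ 2)) := by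
  have h0 : ∀ t : ℝ, exp (-t ^ 2 * r ^ 2) = exp (-(r ^ 2) * t ^ 2) := by
    intro t
    congr 1
    ring
  simp_rw [h0]
  rw [← ofReal_integral_eq_lintegral_ofReal, integral_const_mul, integral_gaussian,
    Real.sqrt_div pi_pos.le, Real.sqrt_sq hr.le]
  · congr 1
    field_simp
  · exact (integrable_exp_neg_mul_sq (by positivity)).const_mul _
  · exact Filter.Eventually.of_forall fun t => by positivity

lemma ae_ne_diag : ∀ᵐ p : E3 × E3, p.1 ≠ p.2 := by
  have hm : MeasurableSet {p : E3 × E3 | p.1 = p.2} :=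
    (isClosed_eq continuous_fst continuous_snd).measurableSet
  rw [ae_iff]
  simp only [ne_eq, not_not]
  rw [Measure.volume_eq_prod, Measure.measure_prod_null hm]
  refine Filter.Eventually.of_forall fun x => ?_
  have : Prod.mk x ⁻¹' {p : E3 × E3 | p.1 = p.2} = {x} := by
    ext y
    simp [eq_comm]
  beta_reduce
  rw [this]
  simp

theorem Ibeta_eq_one_dim_integral (β : ℝ) (hβ : 0 < β)
    (a b : EuclideanSpace ℝ (Fin 2)) :
    Ibeta β a b =
      ∫ t : ℝ, Real.sqrt (π / (1 + 2 * t ^ 2)) * (β / (β + 2 * t ^ 2)) *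
        Real.exp (-(β * t ^ 2 / (β + 2 * t ^ 2)) * ‖a - b‖ ^ 2) := by
  have hd : ∀ (a : EuclideanSpace ℝ (Fin 2)) (x y : ℝ), 0 ≤ deltaGauss2 β a x y := by
    intro a x y
    unfold deltaGauss2
    positivity
  have hN : ∀ p : E3 × E3, 0 ≤ deltaGauss2 β a (p.1 0) (p.1 1) * Real.exp (-(p.1 2) ^ 2) *
      (deltaGauss2 β b (p.2 0) (p.2 1) * Real.exp (-(p.2 2) ^ 2)) := fun p =>
    mul_nonneg (mul_nonneg (hd _ _ _) (exp_pos _).le) (mul_nonneg (hd _ _ _) (exp_pos _).le)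
  have hGm : Measurable (fun q : (E3 × E3) × ℝ => Gt β a b q.1 q.2) := by
    unfold Gt deltaGauss2
    fun_prop
  unfold Ibeta
  rw [integral_eq_lintegral_of_nonneg_ae, integral_eq_lintegral_of_nonneg_ae]
  · congr 1
    have step : ∀ᵐ p : E3 × E3, ENNReal.ofReal (deltaGauss2 β a (p.1 0) (p.1 1) *
        Real.exp (-(p.1 2) ^ 2) * (deltaGauss2 β b (p.2 0) (p.2 1) * Real.exp (-(p.2 2) ^ 2)) /
        ‖p.1 - p.2‖) = ∫⁻ t : ℝ, ENNReal.ofReal (Gt β a b p t) := by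
      filter_upwards [ae_ne_diag] with p hp
      have hr : 0 < ‖p.1 - p.2‖ := norm_pos_iff.2 (sub_ne_zero.2 hp)
      rw [← mul_one_div, ENNReal.ofReal_mul (hN p), inv_norm_lintegral _ hr,
        ← lintegral_const_mul _ (by fun_prop)]
      refine lintegral_congr fun t => ?_
      rw [← ENNReal.ofReal_mul (hN p)]
      rfl
    rw [lintegral_congr_ae step, lintegral_lintegral_swap]
    · refine lintegral_congr fun t => ?_
      rw [← Gt_integral β hβ, ofReal_integral_eq_lintegral_ofReal (Gt_integrable β hβ a b t)]
      exact Filter.Eventually.of_forall fun p => mul_nonneg (hN p) (by positivity)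
    · exact hGm.ennreal_ofReal.aemeasurable
  · exact Filter.Eventually.of_forall fun t => by positivity
  · exact Measurable.aestronglyMeasurable (by fun_prop)
  · exact Filter.Eventually.of_forall fun p => div_nonneg (hN p) (norm_nonneg _)
  · refine Measurable.aestronglyMeasurable ?_
    unfold deltaGauss2
    fun_prop
end

section
/- For all a, b ∈ ℝ² with a ≠ b, lim_{β → ∞} I_β(a,b) = 2 ∫_0^∞ √(π/(1 + 2u²)) · e^{-u²|a - b|²} du. -/
open Real MeasureTheory Filter Topology

open scoped ENNReal

lemma gauss_l (c m : ℝ) (hc : 0 < c) :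
    ∫⁻ t : ℝ, ENNReal.ofReal (Real.exp (-c * (t - m) ^ 2)) = ENNReal.ofReal (√(π / c)) := by
  rw [← integral_gaussian, ofReal_integral_eq_lintegral_ofReal (integrable_exp_neg_mul_sq hc)
    (Eventually.of_forall fun _ => (Real.exp_pos _).le)]
  exact lintegral_sub_right_eq_self (fun t => ENNReal.ofReal (Real.exp (-c * t ^ 2))) m

lemma pair_l (β a b u : ℝ) (hβ : 0 < β) :
    ∫⁻ q : ℝ × ℝ, ENNReal.ofReal (Real.exp (-β * (q.1 - a) ^ 2 - β * (q.2 - b) ^ 2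
        - u ^ 2 * (q.1 - q.2) ^ 2))
      = ENNReal.ofReal (π / √(β * (β + 2 * u ^ 2)) *
          Real.exp (-(β * u ^ 2 / (β + 2 * u ^ 2)) * (a - b) ^ 2)) := by
  have h1 : 0 < β + u ^ 2 := by positivity
  have h2 : 0 < β + 2 * u ^ 2 := by positivity
  rw [Measure.volume_eq_prod, lintegral_prod _ (by fun_prop)]
  have inner : ∀ s : ℝ, ∫⁻ t : ℝ, ENNReal.ofReal (Real.exp (-β * (s - a) ^ 2 - β * (t - b) ^ 2
        - u ^ 2 * (s - t) ^ 2)) =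
      ENNReal.ofReal (√(π / (β + u ^ 2)) *
        Real.exp (-(β * u ^ 2 / (β + 2 * u ^ 2)) * (a - b) ^ 2)) *
      ENNReal.ofReal (Real.exp (-(β * (β + 2 * u ^ 2) / (β + u ^ 2)) *
        (s - ((β + u ^ 2) * a + u ^ 2 * b) / (β + 2 * u ^ 2)) ^ 2)) := by
    intro s
    have : ∀ t : ℝ, ENNReal.ofReal (Real.exp (-β * (s - a) ^ 2 - β * (t - b) ^ 2
        - u ^ 2 * (s - t) ^ 2)) = ENNReal.ofReal (Real.exp (-β * (s - a) ^ 2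
          - β * u ^ 2 / (β + u ^ 2) * (s - b) ^ 2)) *
          ENNReal.ofReal (Real.exp (-(β + u ^ 2) *
            (t - (β * b + u ^ 2 * s) / (β + u ^ 2)) ^ 2)) := by
      intro t
      rw [← ENNReal.ofReal_mul (by positivity), ← Real.exp_add]
      congr 2
      field_simp
      ring
    simp_rw [this]
    rw [lintegral_const_mul _ (by fun_prop), gauss_l _ _ h1, ← ENNReal.ofReal_mul (by positivity),
      ← ENNReal.ofReal_mul (by positivity), mul_assoc (√_), ← Real.exp_add, mul_comm]
    congr 3
    field_simp
    ring
  simp_rw [inner]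
  rw [lintegral_const_mul _ (by fun_prop), gauss_l _ _ (by positivity),
    ← ENNReal.ofReal_mul (by positivity)]
  congr 1
  rw [mul_right_comm, ← Real.sqrt_mul (by positivity)]
  congr 1
  rw [show π / (β + u ^ 2) * (π / (β * (β + 2 * u ^ 2) / (β + u ^ 2)))
    = π ^ 2 / (β * (β + 2 * u ^ 2)) by field_simp, Real.sqrt_div (by positivity),
    Real.sqrt_sq pi_pos.le]

lemma inv_l (r : ℝ) (hr : 0 < r) :
    ENNReal.ofReal (1 / r) = ∫⁻ u in Set.Ioi (0 : ℝ),
      ENNReal.ofReal (2 / √π * Real.exp (-u ^ 2 * r ^ 2)) := by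
  rw [← ofReal_integral_eq_lintegral_ofReal]
  · rw [integral_const_mul]
    have := integral_gaussian_Ioi (r ^ 2)
    simp_rw [show ∀ u : ℝ, -u ^ 2 * r ^ 2 = -r ^ 2 * u ^ 2 by intro u; ring]
    rw [this, Real.sqrt_div pi_pos.le, Real.sqrt_sq hr.le]
    congr 1
    have : √π ≠ 0 := by positivity
    field_simp
  · have := (integrable_exp_neg_mul_sq (b := r ^ 2) (by positivity)).const_mul (2 / √π)
    refine (this.congr (Eventually.of_forall fun u => ?_)).integrableOn
    simp only
    ring_nf
  · exact Eventually.of_forall fun u => by positivity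

/-- One coordinate factor. -/
noncomputable def pairF (u β a b : ℝ) (q : ℝ × ℝ) : ℝ :=
  Real.exp (-β * (q.1 - a) ^ 2 - β * (q.2 - b) ^ 2 - u ^ 2 * (q.1 - q.2) ^ 2)

lemma pairF_cont (u β a b : ℝ) : Continuous (pairF u β a b) := by
  unfold pairF; fun_prop

lemma pairF_integrable (u β a b : ℝ) (hβ : 0 < β) : Integrable (pairF u β a b) := by
  rw [← lintegral_ofReal_ne_top_iff_integrable (pairF_cont u β a b).aestronglyMeasurable
    (Eventually.of_forall fun _ => (Real.exp_pos _).le)]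
  have := pair_l β a b u hβ
  simp only [pairF]
  rw [this]
  exact ENNReal.ofReal_ne_top

lemma pairF_integral (u β a b : ℝ) (hβ : 0 < β) : ∫ q, pairF u β a b q =
    π / √(β * (β + 2 * u ^ 2)) *
          Real.exp (-(β * u ^ 2 / (β + 2 * u ^ 2)) * (a - b) ^ 2) := by
  have h0 : 0 ≤ᵐ[volume] pairF u β a b := Eventually.of_forall fun _ => (Real.exp_pos _).le
  rw [integral_eq_lintegral_of_nonneg_ae h0
    (pairF_cont u β a b).aestronglyMeasurable]
  simp only [pairF]
  rw [pair_l β a b u hβ, ENNReal.toReal_ofReal (by positivity)]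

lemma mp_coord : MeasurePreserving
    (fun (p : EuclideanSpace ℝ (Fin 3) × EuclideanSpace ℝ (Fin 3)) (i : Fin 3) =>
      ((p.1 i, p.2 i) : ℝ × ℝ)) := by
  have h1 := PiLp.volume_preserving_ofLp (Fin 3)
  have h2 := (volume_measurePreserving_arrowProdEquivProdArrow ℝ ℝ (Fin 3)).symm
  exact h2.comp (h1.prod h1)

/-- The reduced one-dimensional integrand. -/
noncomputable def redG (β d u : ℝ) : ℝ :=
  2 * (√(π / (1 + 2 * u ^ 2)) *
    (β / (β + 2 * u ^ 2) * Real.exp (-(β * u ^ 2 / (β + 2 * u ^ 2)) * d ^ 2)))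

lemma six_l (β u : ℝ) (hβ : 0 < β) (a b : EuclideanSpace ℝ (Fin 2)) :
    ∫⁻ p : EuclideanSpace ℝ (Fin 3) × EuclideanSpace ℝ (Fin 3),
      ENNReal.ofReal (deltaGauss2 β a (p.1 0) (p.1 1) * Real.exp (-(p.1 2) ^ 2) *
      (deltaGauss2 β b (p.2 0) (p.2 1) * Real.exp (-(p.2 2) ^ 2)) *
        (2 / √π * Real.exp (-u ^ 2 * ‖p.1 - p.2‖ ^ 2))) = ENNReal.ofReal (redG β ‖a - b‖ u) := by
  let B : Fin 3 → ℝ := ![β, β, 1]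
  let A : Fin 3 → ℝ := ![a 0, a 1, 0]
  let Ab : Fin 3 → ℝ := ![b 0, b 1, 0]
  have hB : ∀ i, 0 < B i := by
    intro i; fin_cases i <;> simp [B, hβ]
  have key : ∀ p : EuclideanSpace ℝ (Fin 3) × EuclideanSpace ℝ (Fin 3),
      deltaGauss2 β a (p.1 0) (p.1 1) * Real.exp (-(p.1 2) ^ 2) *
      (deltaGauss2 β b (p.2 0) (p.2 1) * Real.exp (-(p.2 2) ^ 2)) *
        (2 / √π * Real.exp (-u ^ 2 * ‖p.1 - p.2‖ ^ 2)) =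
      (β / π) ^ 2 * (2 / √π) * ∏ i, pairF u (B i) (A i) (Ab i) (p.1 i, p.2 i) := by
    intro p
    have e : ∏ i, pairF u (B i) (A i) (Ab i) (p.1 i, p.2 i) =
        Real.exp (-β * ((p.1 0 - a 0) ^ 2 + (p.1 1 - a 1) ^ 2)) * Real.exp (-(p.1 2) ^ 2) *
        (Real.exp (-β * ((p.2 0 - b 0) ^ 2 + (p.2 1 - b 1) ^ 2)) * Real.exp (-(p.2 2) ^ 2)) *
        Real.exp (-u ^ 2 * ‖p.1 - p.2‖ ^ 2) := by
      rw [Fin.prod_univ_three, EuclideanSpace.norm_sq_eq, Fin.sum_univ_three]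
      simp only [pairF, ← Real.exp_add, B, A, Ab]
      simp
      ring
    rw [e]
    simp only [deltaGauss2]
    ring
  simp_rw [key]
  have hint : Integrable (fun q : Fin 3 → ℝ × ℝ => (β / π) ^ 2 * (2 / √π) *
      ∏ i, pairF u (B i) (A i) (Ab i) (q i)) :=
    (Integrable.fintype_prod (fun i => pairF_integrable u (B i) (A i) (Ab i) (hB i))).const_mul _
  have hnn : ∀ q : Fin 3 → ℝ × ℝ, 0 ≤ (β / π) ^ 2 * (2 / √π) *
      ∏ i, pairF u (B i) (A i) (Ab i) (q i) := by
    intro q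
    have : 0 ≤ ∏ i, pairF u (B i) (A i) (Ab i) (q i) :=
      Finset.prod_nonneg fun i _ => (Real.exp_pos _).le
    positivity
  have hmeas : Measurable (fun q : Fin 3 → ℝ × ℝ => ENNReal.ofReal ((β / π) ^ 2 * (2 / √π) *
      ∏ i, pairF u (B i) (A i) (Ab i) (q i))) := by
    apply Measurable.ennreal_ofReal
    apply Continuous.measurable
    refine continuous_const.mul (continuous_finsetProd _ fun i _ => ?_)
    exact (pairF_cont _ _ _ _).comp (continuous_apply i)
  rw [mp_coord.lintegral_comp hmeas, ← ofReal_integral_eq_lintegral_ofReal hint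
    (Eventually.of_forall hnn), integral_const_mul, integral_fintype_prod_volume_eq_prod]
  congr 1
  simp_rw [fun i => pairF_integral u (B i) (A i) (Ab i) (hB i)]
  rw [Fin.prod_univ_three, redG, EuclideanSpace.norm_sq_eq, Fin.sum_univ_two]
  simp only [B, A, Ab]
  simp
  have h2 : 0 < β + 2 * u ^ 2 := by positivity
  have h3 : 0 < 1 + 2 * u ^ 2 := by positivity
  rw [mul_add (β * u ^ 2 / (β + 2 * u ^ 2)), neg_add, Real.exp_add,
    Real.sqrt_mul hβ.le, Real.sqrt_div pi_pos.le]
  have hs : √β ^ 2 = β := Real.sq_sqrt hβ.le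
  have hs2 : √(β + 2 * u ^ 2) ^ 2 = β + 2 * u ^ 2 := Real.sq_sqrt h2.le
  have hp : √π ^ 2 = π := Real.sq_sqrt pi_pos.le
  have p1 : 0 < √β := Real.sqrt_pos.2 hβ
  have p2 : 0 < √(β + 2 * u ^ 2) := Real.sqrt_pos.2 h2
  have p3 : 0 < √(1 + 2 * u ^ 2) := Real.sqrt_pos.2 h3
  have p4 : 0 < √π := Real.sqrt_pos.2 pi_pos
  generalize Real.exp _ = E1
  generalize Real.exp _ = E2
  have hk : (β / π) ^ 2 * (2 / √π) * (π / (√β * √(β + 2 * u ^ 2)) * (π / (√β * √(β + 2 * u ^ 2)))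
      * (π / √(1 + 2 * u ^ 2))) = 2 * (√π / √(1 + 2 * u ^ 2) * (β / (β + 2 * u ^ 2))) := by
    have : π / (√β * √(β + 2 * u ^ 2)) * (π / (√β * √(β + 2 * u ^ 2)))
        = π ^ 2 / (β * (β + 2 * u ^ 2)) := by
      rw [div_mul_div_comm, mul_mul_mul_comm, ← sq, ← sq, ← sq, hs, hs2]
    rw [this]
    have hpp : π / √π = √π := Real.div_sqrt
    calc _ = 2 * (π / √π / √(1 + 2 * u ^ 2) * (β / (β + 2 * u ^ 2))) := by field_simp
      _ = _ := by rw [hpp]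
  linear_combination (E1 * E2) * hk

lemma diag_null : ∀ᵐ p : EuclideanSpace ℝ (Fin 3) × EuclideanSpace ℝ (Fin 3), 0 < ‖p.1 - p.2‖ := by
  have : volume {p : EuclideanSpace ℝ (Fin 3) × EuclideanSpace ℝ (Fin 3) | p.1 = p.2} = 0 := by
    rw [Measure.volume_eq_prod]
    refine Measure.measure_prod_null_of_ae_null
      (isClosed_eq continuous_fst continuous_snd).measurableSet (Eventually.of_forall fun x => ?_)
    have : Prod.mk x ⁻¹' {p : EuclideanSpace ℝ (Fin 3) × EuclideanSpace ℝ (Fin 3) | p.1 = p.2}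
      = {x} := by ext y; simp [eq_comm]
    simp [this]
  rw [ae_iff]
  convert this using 3 with p
  simp [sub_eq_zero]

lemma redG_nonneg (β d u : ℝ) (hβ : 0 < β) : 0 ≤ redG β d u := by
  unfold redG; positivity

lemma redG_meas (β d : ℝ) : Measurable (redG β d) := by
  unfold redG; fun_prop

lemma Ibeta_eq (β : ℝ) (hβ : 0 < β) (a b : EuclideanSpace ℝ (Fin 2)) :
    Ibeta β a b = ∫ u in Set.Ioi (0 : ℝ), redG β ‖a - b‖ u := by
  have hd : ∀ (c : EuclideanSpace ℝ (Fin 2)) x y, 0 ≤ deltaGauss2 β c x y := by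
    intro c x y; unfold deltaGauss2; positivity
  have hm : ∀ c : EuclideanSpace ℝ (Fin 2), Measurable fun q : ℝ × ℝ => deltaGauss2 β c q.1 q.2 := by
    intro c; unfold deltaGauss2; fun_prop
  let w : EuclideanSpace ℝ (Fin 3) × EuclideanSpace ℝ (Fin 3) → ℝ := fun p =>
    deltaGauss2 β a (p.1 0) (p.1 1) * Real.exp (-(p.1 2) ^ 2) *
      (deltaGauss2 β b (p.2 0) (p.2 1) * Real.exp (-(p.2 2) ^ 2))
  have hw0 : ∀ p, 0 ≤ w p := fun p => by
    have := hd a (p.1 0) (p.1 1)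
    have := hd b (p.2 0) (p.2 1)
    simp only [w]; positivity
  have hwm : Measurable w := by
    simp only [w, deltaGauss2]; fun_prop
  have e1 : Ibeta β a b = ∫ p, w p / ‖p.1 - p.2‖ := rfl
  rw [e1, integral_eq_lintegral_of_nonneg_ae
      (Eventually.of_forall fun p => div_nonneg (hw0 p) (norm_nonneg _))
      (by
        apply Measurable.aestronglyMeasurable
        fun_prop),
    integral_eq_lintegral_of_nonneg_ae
      (Eventually.of_forall fun u => redG_nonneg β _ u hβ) (redG_meas β _).aestronglyMeasurable]
  congr 1
  have e2 : ∫⁻ p, ENNReal.ofReal (w p / ‖p.1 - p.2‖) = ∫⁻ p, ∫⁻ u in Set.Ioi (0 : ℝ),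
      ENNReal.ofReal (w p * (2 / √π * Real.exp (-u ^ 2 * ‖p.1 - p.2‖ ^ 2))) := by
    apply lintegral_congr_ae
    filter_upwards [diag_null] with p hp
    rw [div_eq_mul_one_div, ENNReal.ofReal_mul (hw0 p), inv_l _ hp,
      ← lintegral_const_mul _ (by fun_prop)]
    simp_rw [ENNReal.ofReal_mul (hw0 p)]
  rw [e2, lintegral_lintegral_swap (by
    apply Measurable.aemeasurable
    unfold Function.uncurry
    fun_prop)]
  refine lintegral_congr fun u => ?_
  exact six_l β u hβ a b

lemma redG_bound (β d u : ℝ) (hβ : 0 < β) :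
    ‖redG β d u‖ ≤ 2 * √π * (1 + (d * u) ^ 2)⁻¹ := by
  rw [Real.norm_of_nonneg (redG_nonneg β d u hβ), redG, ← mul_assoc]
  have h2 : 0 < β + 2 * u ^ 2 := by positivity
  refine mul_le_mul ?_ ?_ (by positivity) (by positivity)
  · have : √(π / (1 + 2 * u ^ 2)) ≤ √π :=
      Real.sqrt_le_sqrt (div_le_self pi_pos.le (by nlinarith [sq_nonneg u]))
    linarith
  · set w := β / (β + 2 * u ^ 2) with hw
    have hw0 : 0 < w := by positivity
    have hw1 : w ≤ 1 := by rw [hw, div_le_one h2]; nlinarith [sq_nonneg u]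
    have e : -(β * u ^ 2 / (β + 2 * u ^ 2)) * d ^ 2 = -(w * (d * u) ^ 2) := by
      rw [hw]; ring
    rw [e, Real.exp_neg]
    have hx : 1 + w * (d * u) ^ 2 ≤ Real.exp (w * (d * u) ^ 2) := by
      linarith [Real.add_one_le_exp (w * (d * u) ^ 2)]
    rw [← div_eq_mul_inv, ← one_div, div_le_div_iff₀ (Real.exp_pos _) (by positivity)]
    nlinarith

theorem Ibeta_limit (a b : EuclideanSpace ℝ (Fin 2)) (hab : a ≠ b) :
    Tendsto (fun β : ℝ => Ibeta β a b) atTop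
      (𝓝 (2 * ∫ u in Set.Ioi (0 : ℝ),
        Real.sqrt (π / (1 + 2 * u ^ 2)) * Real.exp (-u ^ 2 * ‖a - b‖ ^ 2))) := by
  have hd : ‖a - b‖ ≠ 0 := by simpa [sub_eq_zero] using hab
  rw [← integral_const_mul]
  have hev : (fun β : ℝ => ∫ u in Set.Ioi (0 : ℝ), redG β ‖a - b‖ u) =ᶠ[atTop]
      (fun β : ℝ => Ibeta β a b) := by
    filter_upwards [eventually_gt_atTop 0] with β hβ
    exact (Ibeta_eq β hβ a b).symm
  refine Tendsto.congr' hev ?_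
  refine tendsto_integral_filter_of_dominated_convergence
    (fun u => 2 * √π * (1 + (‖a - b‖ * u) ^ 2)⁻¹) ?_ ?_ ?_ ?_
  · exact Eventually.of_forall fun β => (redG_meas β _).aestronglyMeasurable
  · filter_upwards [eventually_gt_atTop 0] with β hβ
    exact Eventually.of_forall fun u => redG_bound β _ u hβ
  · exact ((integrable_inv_one_add_sq.comp_mul_left' hd).const_mul _).integrableOn
  · refine Eventually.of_forall fun u => ?_
    have hlim : Tendsto (fun β : ℝ => β / (β + 2 * u ^ 2)) atTop (𝓝 1) := by
      have h0 : Tendsto (fun β : ℝ => 1 - 2 * u ^ 2 / (β + 2 * u ^ 2)) atTop (𝓝 (1 - 0)) :=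
        tendsto_const_nhds.sub
          (tendsto_const_nhds.div_atTop (tendsto_atTop_add_const_right _ _ tendsto_id))
      rw [sub_zero] at h0
      refine h0.congr' ?_
      filter_upwards [eventually_gt_atTop 0] with β hβ
      have h2 : 0 < β + 2 * u ^ 2 := by positivity
      field_simp
      ring
    have hc : Continuous fun w : ℝ => 2 * (√(π / (1 + 2 * u ^ 2)) *
        (w * Real.exp (-(w * u ^ 2) * ‖a - b‖ ^ 2))) := by fun_prop
    have := (hc.tendsto 1).comp hlim
    simp only [one_mul] at this
    refine this.congr fun β => ?_
    simp only [Function.comp, redG]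
    rw [div_mul_eq_mul_div β (β + 2 * u ^ 2) (u ^ 2)]
end

section
/- For every a ∈ ℝ³ with a ≠ 0, ∫_{ℝ³} e^{-|x|²} / (|x|² · |a - x|) dx = (4π/|a|) ∫_0^{|a|} e^{-s²} ds + 4π ∫_{|a|}^∞ e^{-s²}/s ds. -/
open Real MeasureTheory

lemma cl_subst (H : ℝ → ENNReal) (z : ℝ) :
    ∫⁻ ρ in Set.Ioi (0:ℝ), ENNReal.ofReal ρ * H (z ^ 2 + ρ ^ 2)
      = ∫⁻ r in Set.Ioi |z|, ENNReal.ofReal r * H (r ^ 2) := by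
  have himg : (fun ρ : ℝ => √(z ^ 2 + ρ ^ 2)) '' Set.Ioi 0 = Set.Ioi |z| := by
    ext r
    simp only [Set.mem_image, Set.mem_Ioi]
    constructor
    · rintro ⟨ρ, hρ, rfl⟩
      rw [← Real.sqrt_sq_eq_abs]
      apply Real.sqrt_lt_sqrt (sq_nonneg z)
      nlinarith
    · intro hr
      have hr0 : 0 < r := lt_of_le_of_lt (abs_nonneg z) hr
      have h1 : z ^ 2 < r ^ 2 := by
        rw [← sq_abs z]; nlinarith [abs_nonneg z]
      refine ⟨√(r ^ 2 - z ^ 2), Real.sqrt_pos.2 (by linarith), ?_⟩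
      rw [Real.sq_sqrt (by linarith)]
      simp [Real.sqrt_sq hr0.le]
  have hpos : ∀ ρ ∈ Set.Ioi (0:ℝ), 0 < z ^ 2 + ρ ^ 2 := by
    intro ρ hρ
    have : 0 < ρ := hρ
    positivity
  rw [← himg, lintegral_image_eq_lintegral_abs_deriv_mul measurableSet_Ioi
    (f' := fun ρ => ρ / √(z ^ 2 + ρ ^ 2))]
  · refine setLIntegral_congr_fun measurableSet_Ioi ?_
    intro ρ hρ
    have h := hpos ρ hρ
    have h0 : 0 < ρ := hρ
    have hs := Real.sqrt_pos.2 h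
    simp only
    rw [← mul_assoc, ← ENNReal.ofReal_mul (abs_nonneg _), Real.sq_sqrt h.le,
      abs_of_pos (by positivity), div_mul_cancel₀ _ hs.ne']
  · intro ρ hρ
    have h := hpos ρ hρ
    have : HasDerivAt (fun ρ : ℝ => z ^ 2 + ρ ^ 2) (2 * ρ) ρ := by
      simpa using (hasDerivAt_pow 2 ρ).const_add (z ^ 2)
    have h2 := this.sqrt h.ne'
    refine HasDerivAt.hasDerivWithinAt (h2.congr_deriv ?_)
    have hs := Real.sqrt_pos.2 h
    field_simp
  · intro x hx y hy hxy
    have hx0 : 0 < x := hx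
    have hy0 : 0 < y := hy
    have := (Real.sqrt_inj (hpos x hx).le (hpos y hy).le).1 hxy
    nlinarith [(pow_left_inj₀ hx0.le hy0.le (two_ne_zero)).1 (by linarith : x ^ 2 = y ^ 2)]

lemma cl_polar (H : ℝ → ENNReal) (hH : Measurable H) :
    ∫⁻ p : ℝ × ℝ, H (p.1 ^ 2 + p.2 ^ 2)
      = ENNReal.ofReal (2 * π) * ∫⁻ ρ in Set.Ioi (0:ℝ), ENNReal.ofReal ρ * H (ρ ^ 2) := by
  rw [← lintegral_comp_polarCoord_symm]
  have h1 : ∀ p : ℝ × ℝ, (polarCoord.symm p).1 ^ 2 + (polarCoord.symm p).2 ^ 2 = p.1 ^ 2 := by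
    intro p
    simp only [polarCoord_symm_apply]
    nlinarith [Real.sin_sq_add_cos_sq p.2]
  simp only [h1, polarCoord_target, smul_eq_mul]
  rw [Measure.volume_eq_prod, setLIntegral_prod _ (by fun_prop)]
  simp only [lintegral_const, Measure.restrict_apply, MeasurableSet.univ, Set.univ_inter,
    Real.volume_Ioo]
  rw [lintegral_mul_const _ (by fun_prop), mul_comm]
  congr 2
  ring

lemma cl_coord (H : ℝ → ℝ → ENNReal) (hH : Measurable (Function.uncurry H)) :
    ∫⁻ x : EuclideanSpace ℝ (Fin 3), H (x 0) (x 1 ^ 2 + x 2 ^ 2)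
      = ∫⁻ z : ℝ, ∫⁻ p : ℝ × ℝ, H z (p.1 ^ 2 + p.2 ^ 2) := by
  have e1 := EuclideanSpace.volume_preserving_symm_measurableEquiv_toLp (Fin 3)
  have e2 := volume_preserving_piFinSuccAbove (fun _ : Fin 3 => ℝ) 0
  have e3 := volume_preserving_finTwoArrow ℝ
  have e4 := (MeasurePreserving.id (volume : Measure ℝ)).prod e3
  have e := (e4.comp e2).comp e1
  have hm : Measurable (fun q : ℝ × ℝ × ℝ => H q.1 (q.2.1 ^ 2 + q.2.2 ^ 2)) :=
    hH.comp (f := fun q : ℝ × ℝ × ℝ => (q.1, q.2.1 ^ 2 + q.2.2 ^ 2)) (by fun_prop)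
  have := e.lintegral_comp hm
  rw [lintegral_prod _ hm.aemeasurable] at this
  exact this

lemma cl_angle (A r : ℝ) (hA : 0 < A) (hr : 0 < r) (hne : r ≠ A) :
    ∫⁻ z in Set.Ioo (-r) r, ENNReal.ofReal (1 / √(A ^ 2 - 2 * A * z + r ^ 2))
      = ENNReal.ofReal (2 * min A r / A) := by
  have hpos : ∀ z ∈ Set.Icc (-r) r, 0 < A ^ 2 - 2 * A * z + r ^ 2 := by
    intro z hz
    have : 0 < (r - A) ^ 2 := by
      have := sub_ne_zero.2 hne
      positivity
    nlinarith [hz.2]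
  have hc : ContinuousOn (fun z => 1 / √(A ^ 2 - 2 * A * z + r ^ 2)) (Set.Icc (-r) r) := by
    refine ContinuousOn.div (by fun_prop) (by fun_prop) ?_
    intro z hz
    exact (Real.sqrt_pos.2 (hpos z hz)).ne'
  have hi : ∫ z in (-r)..r, 1 / √(A ^ 2 - 2 * A * z + r ^ 2) = 2 * min A r / A := by
    have huI : Set.uIcc (-r) r = Set.Icc (-r) r := Set.uIcc_of_le (by linarith)
    rw [intervalIntegral.integral_eq_sub_of_hasDerivAt
      (f := fun z => - √(A ^ 2 - 2 * A * z + r ^ 2) / A)]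
    · have e1 : A ^ 2 - 2 * A * r + r ^ 2 = (A - r) ^ 2 := by ring
      have e2 : A ^ 2 - 2 * A * -r + r ^ 2 = (A + r) ^ 2 := by ring
      simp only [e1, e2, Real.sqrt_sq_eq_abs]
      rw [abs_of_pos (by linarith : 0 < A + r)]
      rcases le_total A r with h | h
      · rw [min_eq_left h, abs_of_nonpos (by linarith)]; ring
      · rw [min_eq_right h, abs_of_nonneg (by linarith)]; ring
    · intro z hz
      rw [huI] at hz
      have h := hpos z hz
      have h1 : HasDerivAt (fun z : ℝ => A ^ 2 - 2 * A * z + r ^ 2) (- (2 * A)) z := by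
        simpa using (((hasDerivAt_id z).const_mul (2 * A)).const_sub (A ^ 2)).add_const (r ^ 2)
      refine ((h1.sqrt h.ne').neg.div_const A).congr_deriv ?_
      have hs := Real.sqrt_pos.2 h
      field_simp
    · apply ContinuousOn.intervalIntegrable
      rw [huI]; exact hc
  rw [← hi, intervalIntegral.integral_of_le (by linarith), integral_Ioc_eq_integral_Ioo,
    ofReal_integral_eq_lintegral_ofReal]
  · exact (hc.integrableOn_Icc).mono_set Set.Ioo_subset_Icc_self
  · exact Filter.Eventually.of_forall fun z => by positivity

lemma cl_rot (A : ℝ) (a : EuclideanSpace ℝ (Fin 3)) (hA : A = ‖a‖) :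
    ∫⁻ x : EuclideanSpace ℝ (Fin 3),
        ENNReal.ofReal (Real.exp (-‖x‖ ^ 2) / (‖x‖ ^ 2 * ‖a - x‖))
      = ∫⁻ x : EuclideanSpace ℝ (Fin 3), ENNReal.ofReal
        (Real.exp (-(x 0 ^ 2 + (x 1 ^ 2 + x 2 ^ 2))) / ((x 0 ^ 2 + (x 1 ^ 2 + x 2 ^ 2)) *
          √(A ^ 2 - 2 * A * x 0 + (x 0 ^ 2 + (x 1 ^ 2 + x 2 ^ 2))))) := by
  have hA0 : 0 ≤ A := hA ▸ norm_nonneg a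
  set b : EuclideanSpace ℝ (Fin 3) := !₂[A, 0, 0] with hb
  have hbn : ‖b‖ = ‖a‖ := by
    rw [← hA, EuclideanSpace.norm_eq]
    simp [hb, Fin.sum_univ_three, hA0]
  let R := Submodule.reflection (Submodule.span ℝ {b - a})ᗮ
  have hR : R b = a := Submodule.reflection_sub hbn
  rw [← (R.measurePreserving).lintegral_comp (by fun_prop)]
  refine lintegral_congr fun x => ?_
  have h1 : ‖a - R x‖ = ‖b - x‖ := by
    rw [← hR, ← map_sub, LinearIsometryEquiv.norm_map]
  rw [h1, LinearIsometryEquiv.norm_map]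
  have h2 : ‖x‖ ^ 2 = x 0 ^ 2 + (x 1 ^ 2 + x 2 ^ 2) := by
    rw [EuclideanSpace.norm_sq_eq]; simp [Fin.sum_univ_three, add_assoc]
  have h3 : ‖b - x‖ = √(A ^ 2 - 2 * A * x 0 + (x 0 ^ 2 + (x 1 ^ 2 + x 2 ^ 2))) := by
    rw [EuclideanSpace.norm_eq]
    congr 1
    simp [Fin.sum_univ_three, hb]
    ring
  rw [h2, h3]

lemma cl_lint (A : ℝ) (a : EuclideanSpace ℝ (Fin 3)) (hA : A = ‖a‖) (hA0 : 0 < A) :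
    ∫⁻ x : EuclideanSpace ℝ (Fin 3),
        ENNReal.ofReal (Real.exp (-‖x‖ ^ 2) / (‖x‖ ^ 2 * ‖a - x‖))
      = ∫⁻ r in Set.Ioi (0:ℝ),
        ENNReal.ofReal (2 * π * (Real.exp (- r ^ 2) / r * (2 * min A r / A))) := by
  rw [cl_rot A a hA]
  let G : ℝ → ℝ → ENNReal := fun z u =>
    ENNReal.ofReal (Real.exp (-u) / (u * √(A ^ 2 - 2 * A * z + u)))
  have hG : Measurable (Function.uncurry G) := by
    unfold Function.uncurry; fun_prop
  have hG' : Measurable (Function.uncurry (fun z s => G z (z ^ 2 + s))) :=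
    hG.comp (f := fun q : ℝ × ℝ => (q.1, q.1 ^ 2 + q.2)) (by fun_prop)
  have e1 := cl_coord (fun z s => G z (z ^ 2 + s)) hG'
  refine e1.trans ?_
  have e2 : ∀ z : ℝ, ∫⁻ p : ℝ × ℝ, G z (z ^ 2 + (p.1 ^ 2 + p.2 ^ 2))
      = ENNReal.ofReal (2 * π) * ∫⁻ r, (Set.Ioi |z|).indicator
          (fun r => ENNReal.ofReal r * G z (r ^ 2)) r := by
    intro z
    rw [cl_polar (fun s => G z (z ^ 2 + s)) (hG'.comp measurable_prodMk_left), cl_subst (G z) z,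
      lintegral_indicator measurableSet_Ioi]
  simp only [e2]
  have hS : MeasurableSet {q : ℝ × ℝ | |q.1| < q.2} :=
    measurableSet_lt (by fun_prop) (by fun_prop)
  have hm : Measurable (Function.uncurry fun z r : ℝ => (Set.Ioi |z|).indicator
          (fun r => ENNReal.ofReal r * G z (r ^ 2)) r) := by
    have h : Measurable (fun q : ℝ × ℝ => ENNReal.ofReal q.2 * G q.1 (q.2 ^ 2)) :=
      Measurable.mul (by fun_prop)
        (hG.comp (f := fun q : ℝ × ℝ => (q.1, q.2 ^ 2)) (by fun_prop))
    exact h.indicator hS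
  rw [lintegral_const_mul' _ _ ENNReal.ofReal_ne_top, lintegral_lintegral_swap hm.aemeasurable,
    ← lintegral_const_mul' _ _ ENNReal.ofReal_ne_top, ← lintegral_indicator measurableSet_Ioi]
  have hae : ∀ᵐ r : ℝ, r ≠ A := by simp [ae_iff]
  refine lintegral_congr_ae ?_
  filter_upwards [hae] with r hr
  by_cases h0 : 0 < r
  · rw [Set.indicator_of_mem (Set.mem_Ioi.2 h0)]
    have e3 : ∀ z : ℝ, (Set.Ioi |z|).indicator (fun r => ENNReal.ofReal r * G z (r ^ 2)) r
        = (Set.Ioo (-r) r).indicator (fun z => ENNReal.ofReal (Real.exp (- r ^ 2) / r) *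
          ENNReal.ofReal (1 / √(A ^ 2 - 2 * A * z + r ^ 2))) z := by
      intro z
      have hiff : r ∈ Set.Ioi |z| ↔ z ∈ Set.Ioo (-r) r := by
        simp [abs_lt]
      by_cases hz : z ∈ Set.Ioo (-r) r
      · rw [Set.indicator_of_mem hz, Set.indicator_of_mem (hiff.2 hz)]
        rw [← ENNReal.ofReal_mul h0.le, ← ENNReal.ofReal_mul (by positivity)]
        congr 1
        by_cases hs : √(A ^ 2 - 2 * A * z + r ^ 2) = 0
        · simp [hs]
        · field_simp
      · rw [Set.indicator_of_notMem hz, Set.indicator_of_notMem (fun h => hz (hiff.1 h))]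
    simp only [e3]
    rw [lintegral_indicator measurableSet_Ioo, lintegral_const_mul' _ _ ENNReal.ofReal_ne_top,
      cl_angle A r hA0 h0 hr, ← ENNReal.ofReal_mul (by positivity),
      ← ENNReal.ofReal_mul (by positivity)]
  · have : ∀ z : ℝ, (Set.Ioi |z|).indicator (fun r => ENNReal.ofReal r * G z (r ^ 2)) r = 0 := by
      intro z
      apply Set.indicator_of_notMem
      simp only [Set.mem_Ioi, not_lt]
      exact (not_lt.1 h0).trans (abs_nonneg z)
    simp [this, h0]

theorem coulomb_laplace_expansion (a : EuclideanSpace ℝ (Fin 3)) (ha : a ≠ 0) :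
    ∫ x : EuclideanSpace ℝ (Fin 3),
        Real.exp (-‖x‖ ^ 2) / (‖x‖ ^ 2 * ‖a - x‖)
      = (4 * π / ‖a‖) * (∫ s in (0 : ℝ)..‖a‖, Real.exp (-s ^ 2)) +
          4 * π * ∫ s in Set.Ioi ‖a‖, Real.exp (-s ^ 2) / s := by
  have hA0 : 0 < ‖a‖ := norm_pos_iff.2 ha
  rw [integral_eq_lintegral_of_nonneg_ae (Filter.Eventually.of_forall fun x => by positivity)
    (by fun_prop : Measurable _).aestronglyMeasurable, cl_lint ‖a‖ a rfl hA0]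
  set A := ‖a‖
  rw [← integral_eq_lintegral_of_nonneg_ae]
  rotate_left
  · filter_upwards [ae_restrict_mem measurableSet_Ioi] with r hr
    have : 0 < r := hr
    positivity
  · exact (by fun_prop : Measurable _).aestronglyMeasurable
  have c1 : Set.EqOn (fun r => 2 * π * (Real.exp (- r ^ 2) / r * (2 * min A r / A)))
      (fun r => 4 * π / A * Real.exp (- r ^ 2)) (Set.Ioc 0 A) := by
    intro r hr
    have := hr.1
    simp only [min_eq_right hr.2]
    field_simp
    ring
  have c2 : Set.EqOn (fun r => 2 * π * (Real.exp (- r ^ 2) / r * (2 * min A r / A)))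
      (fun r => 4 * π * (Real.exp (- r ^ 2) / r)) (Set.Ioi A) := by
    intro r hr
    have hr' : A < r := hr
    have : 0 < r := hA0.trans hr'
    simp only [min_eq_left hr'.le]
    field_simp
    ring
  have hgauss : Integrable (fun r : ℝ => Real.exp (- r ^ 2)) := by
    simpa using integrable_exp_neg_mul_sq (b := 1) one_pos
  have i1 : IntegrableOn (fun r => 4 * π / A * Real.exp (- r ^ 2)) (Set.Ioc 0 A) :=
    (hgauss.const_mul _).integrableOn
  have i2 : IntegrableOn (fun r => 4 * π * (Real.exp (- r ^ 2) / r)) (Set.Ioi A) := by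
    apply Integrable.const_mul
    refine Integrable.mono' (g := fun r => Real.exp (- r ^ 2) / A)
      (hgauss.div_const A).integrableOn (by fun_prop : Measurable _).aestronglyMeasurable ?_
    filter_upwards [ae_restrict_mem measurableSet_Ioi] with r hr
    have hr' : A < r := hr
    have : 0 < r := hA0.trans hr'
    rw [Real.norm_of_nonneg (by positivity)]
    gcongr
  rw [← Set.Ioc_union_Ioi_eq_Ioi hA0.le, setIntegral_union (Set.Ioc_disjoint_Ioi le_rfl)
    measurableSet_Ioi (i1.congr_fun c1.symm measurableSet_Ioc)
    (i2.congr_fun c2.symm measurableSet_Ioi),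
    setIntegral_congr_fun measurableSet_Ioc c1, setIntegral_congr_fun measurableSet_Ioi c2,
    integral_const_mul, integral_const_mul, intervalIntegral.integral_of_le hA0.le]
end

section
/- lim_{a → 0, a ≠ 0} ( ∫_{ℝ³} e^{-|x|²} / (|x|² · |a - x|) dx + 4π ln|a| ) = 4π - 2π γ, where γ is the Euler–Mascheroni constant. -/
open Real MeasureTheory Filter Topology

lemma aux_gamma_int : IntegrableOn (fun t : ℝ => Real.log t * Real.exp (-t)) (Set.Ioi 0) ∧
    ∫ t in Set.Ioi (0:ℝ), Real.log t * Real.exp (-t) = -Real.eulerMascheroniConstant := by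
  have key := mellin_hasDerivAt_of_isBigO_rpow (E := ℂ) (a := 2) (b := 0) (s := 1)
    (f := fun x : ℝ => ((Real.exp (-x) : ℝ) : ℂ)) ?_ ?_ (by norm_num) ?_ (by norm_num)
  · obtain ⟨h1, -⟩ := key
    have h2 := Complex.hasDerivAt_GammaIntegral (s := 1) (by norm_num)
    have h3 : HasDerivAt Complex.Gamma
        (∫ t : ℝ in Set.Ioi 0, (t:ℂ) ^ ((1:ℂ) - 1) * (Real.log t * Real.exp (-t))) 1 := by
      apply h2.congr_of_eventuallyEq
      have : IsOpen {s : ℂ | 0 < s.re} := Complex.continuous_re.isOpen_preimage _ isOpen_Ioi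
      filter_upwards [this.mem_nhds (show (1:ℂ) ∈ {s : ℂ | 0 < s.re} by simp)] with a ha
        using Complex.Gamma_eq_integral ha
    have h4 := h3.unique Complex.hasDerivAt_Gamma_one
    constructor
    · have h5 : IntegrableOn (fun t : ℝ => ((Real.log t * Real.exp (-t) : ℝ) : ℂ)) (Set.Ioi 0) := by
        refine IntegrableOn.congr_fun h1 ?_ measurableSet_Ioi
        intro t ht
        simp
      exact h5.re
    · have h6 : ∫ t : ℝ in Set.Ioi 0, (t:ℂ) ^ ((1:ℂ) - 1) * (Real.log t * Real.exp (-t))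
          = ((∫ t in Set.Ioi (0:ℝ), Real.log t * Real.exp (-t) : ℝ) : ℂ) := by
        rw [← integral_complex_ofReal]
        simp
      rw [h6] at h4
      exact_mod_cast h4
  · refine (Continuous.continuousOn ?_).locallyIntegrableOn measurableSet_Ioi
    fun_prop
  · rw [← Asymptotics.isBigO_norm_left]
    simp_rw [Complex.norm_real, Asymptotics.isBigO_norm_left]
    simpa only [neg_one_mul] using (isLittleO_exp_neg_mul_rpow_atTop zero_lt_one _).isBigO
  · simp_rw [neg_zero, rpow_zero]
    refine Asymptotics.isBigO_const_of_tendsto (?_ : Tendsto _ _ (𝓝 (1 : ℂ))) one_ne_zero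
    rw [(by simp : (1 : ℂ) = Real.exp (-0))]
    exact (Complex.continuous_ofReal.comp (Real.continuous_exp.comp continuous_neg)).continuousWithinAt

lemma aux_log_int : IntegrableOn (fun r : ℝ => 2 * r * Real.exp (-r^2) * Real.log r) (Set.Ioi 0) ∧
    ∫ r in Set.Ioi (0:ℝ), 2 * r * Real.exp (-r^2) * Real.log r
      = -Real.eulerMascheroniConstant / 2 := by
  obtain ⟨h1, h2⟩ := aux_gamma_int
  have h3 := (integrableOn_Ioi_comp_rpow_iff (fun t : ℝ => Real.log t * Real.exp (-t))
    (p := 2) (by norm_num)).2 h1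
  have h4 := integral_comp_rpow_Ioi (fun t : ℝ => Real.log t * Real.exp (-t))
    (p := 2) (by norm_num)
  have e : Set.EqOn (fun x : ℝ => (1/2:ℝ) * ((|(2:ℝ)| * x ^ ((2:ℝ) - 1)) •
      (fun t : ℝ => Real.log t * Real.exp (-t)) (x ^ (2:ℝ))))
      (fun r : ℝ => 2 * r * Real.exp (-r^2) * Real.log r) (Set.Ioi 0) := by
    intro x hx
    have : (2:ℝ) - 1 = 1 := by norm_num
    simp [this, Real.log_pow]
    ring
  constructor
  · exact IntegrableOn.congr_fun (h3.const_mul (1/2)) e measurableSet_Ioi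
  · rw [← setIntegral_congr_fun measurableSet_Ioi e, integral_const_mul, h4, h2]
    ring

lemma aux_int_div (s : ℝ) (hs : 0 < s) :
    IntegrableOn (fun r : ℝ => Real.exp (-r^2) / r) (Set.Ioi s) := by
  have h : Integrable (fun r : ℝ => s⁻¹ * Real.exp (-1 * r^2)) :=
    (integrable_exp_neg_mul_sq one_pos).const_mul _
  refine Integrable.mono' h.integrableOn ?_ ?_
  · exact (Measurable.aestronglyMeasurable (by fun_prop))
  · filter_upwards [ae_restrict_mem measurableSet_Ioi] with r hr
    have hr' : s < r := hr
    have : 0 < r := hs.trans hr'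
    rw [Real.norm_of_nonneg (by positivity), div_eq_mul_inv, mul_comm]
    simp only [neg_mul, one_mul]
    gcongr

lemma aux_parts (s : ℝ) (hs : 0 < s) :
    ∫ r in Set.Ioi s, Real.exp (-r^2) / r =
      - (Real.exp (-s^2) * Real.log s) + ∫ r in Set.Ioi s, 2 * r * Real.exp (-r^2) * Real.log r := by
  have i1 := aux_int_div s hs
  have i2 := aux_log_int.1.mono_set (Set.Ioi_subset_Ioi hs.le)
  have key := integral_Ioi_of_hasDerivAt_of_tendsto' (a := s) (m := 0)
    (f := fun r : ℝ => Real.exp (-r^2) * Real.log r)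
    (f' := fun r : ℝ => Real.exp (-r^2) / r - 2 * r * Real.exp (-r^2) * Real.log r) ?_
    (i1.sub i2) ?_
  · rw [integral_sub i1 i2] at key
    linarith
  · intro x hx
    have hx0 : 0 < x := hs.trans_le hx
    have h1 : HasDerivAt (fun r : ℝ => Real.exp (-r^2)) (Real.exp (-x^2) * (-(2*x))) x := by
      have := ((hasDerivAt_pow 2 x).neg).exp
      simpa using this
    refine (h1.mul (Real.hasDerivAt_log hx0.ne')).congr_deriv ?_
    ring
  · have h0 : Tendsto (fun r : ℝ => r * Real.exp (-r)) atTop (𝓝 0) := by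
      simpa using tendsto_pow_mul_exp_neg_atTop_nhds_zero 1
    refine squeeze_zero' ?_ ?_ h0
    · filter_upwards [eventually_ge_atTop 1] with r hr
      have := Real.log_nonneg hr
      positivity
    · filter_upwards [eventually_ge_atTop 1] with r hr
      have h1 := Real.log_nonneg hr
      have h2 : Real.log r ≤ r := (Real.log_le_sub_one_of_pos (by linarith)).trans (by linarith)
      have h3 : Real.exp (-r^2) ≤ Real.exp (-r) := Real.exp_le_exp.2 (by nlinarith)
      rw [mul_comm]
      gcongr

lemma aux_tail : Tendsto (fun s : ℝ => ∫ r in Set.Ioi s, 2 * r * Real.exp (-r^2) * Real.log r)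
    (𝓝[>] 0) (𝓝 (-Real.eulerMascheroniConstant / 2)) := by
  rw [← aux_log_int.2]
  have e : (fun s : ℝ => ∫ r in Set.Ioi (0:ℝ), (Set.Ioi s).indicator
      (fun r => 2 * r * Real.exp (-r^2) * Real.log r) r) =ᶠ[𝓝[>] 0]
      (fun s : ℝ => ∫ r in Set.Ioi s, 2 * r * Real.exp (-r^2) * Real.log r) := by
    filter_upwards [self_mem_nhdsWithin] with s hs
    have hs' : 0 < s := hs
    rw [setIntegral_indicator measurableSet_Ioi, Set.inter_eq_self_of_subset_right
      (Set.Ioi_subset_Ioi hs'.le)]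
  refine Tendsto.congr' e ?_
  refine tendsto_integral_filter_of_dominated_convergence
    (fun r => ‖2 * r * Real.exp (-r^2) * Real.log r‖) ?_ ?_ aux_log_int.1.norm ?_
  · exact Eventually.of_forall fun s =>
      (Measurable.indicator (by fun_prop) measurableSet_Ioi).aestronglyMeasurable
  · exact Eventually.of_forall fun s => Eventually.of_forall fun r => norm_indicator_le_norm_self _ _
  · filter_upwards [ae_restrict_mem measurableSet_Ioi] with r hr
    refine Tendsto.congr' ?_ tendsto_const_nhds
    have : ∀ᶠ s in 𝓝[>] (0:ℝ), s < r :=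
      nhdsWithin_le_nhds (eventually_lt_nhds hr)
    filter_upwards [this] with s hs
    rw [Set.indicator_of_mem (show r ∈ Set.Ioi s from hs)]

lemma aux_log_small : Tendsto (fun s : ℝ => Real.log s - Real.exp (-s^2) * Real.log s)
    (𝓝[>] 0) (𝓝 0) := by
  have h : Tendsto (fun s : ℝ => Real.log s * s) (𝓝[>] 0) (𝓝 0) := by
    simpa using tendsto_log_mul_rpow_nhdsGT_zero (r := 1) one_pos
  rw [tendsto_zero_iff_abs_tendsto_zero] at h ⊢
  refine squeeze_zero' (Eventually.of_forall fun s => abs_nonneg _) ?_ h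
  have : ∀ᶠ s in 𝓝[>] (0:ℝ), s < 1 := nhdsWithin_le_nhds (eventually_lt_nhds one_pos)
  filter_upwards [self_mem_nhdsWithin, this] with s hs hs1
  have hs' : 0 < s := hs
  have h1 : Real.exp (-s^2) ≤ 1 := Real.exp_le_one_iff.2 (by nlinarith)
  have h2 : 1 - s^2 ≤ Real.exp (-s^2) := by linarith [Real.add_one_le_exp (-s^2)]
  have : Real.log s - Real.exp (-s^2) * Real.log s = Real.log s * (1 - Real.exp (-s^2)) := by ring
  simp only [Function.comp, this, abs_mul]
  rw [abs_of_nonneg (show 0 ≤ 1 - Real.exp (-s^2) by linarith), abs_of_pos hs']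
  refine mul_le_mul_of_nonneg_left ?_ (abs_nonneg _)
  nlinarith

lemma aux_avg : Tendsto (fun s : ℝ => ∫ r in Set.Ioc 0 s, Real.exp (-r^2) / s)
    (𝓝[>] 0) (𝓝 1) := by
  have hc : Continuous fun r : ℝ => Real.exp (-r^2) := by fun_prop
  have h := (hc.integral_hasStrictDerivAt 0 0).hasDerivAt
  rw [hasDerivAt_iff_tendsto_slope] at h
  have h' := h.mono_left (nhdsWithin_mono 0 (show Set.Ioi (0:ℝ) ⊆ {0}ᶜ from fun x hx => ne_of_gt hx))
  simp only [ne_eq, OfNat.ofNat_ne_zero, not_false_eq_true, zero_pow, neg_zero, Real.exp_zero] at h'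
  refine h'.congr' ?_
  filter_upwards [self_mem_nhdsWithin] with s hs
  have hs' : 0 < s := hs
  rw [slope_def_field, intervalIntegral.integral_same, intervalIntegral.integral_of_le hs'.le,
    integral_div]
  simp

lemma aux_radial_int (s : ℝ) (hs : 0 < s) :
    IntegrableOn (fun r : ℝ => Real.exp (-r^2) / max r s) (Set.Ioi 0) := by
  have h : Integrable (fun r : ℝ => s⁻¹ * Real.exp (-1 * r^2)) :=
    (integrable_exp_neg_mul_sq one_pos).const_mul _
  refine Integrable.mono' h.integrableOn ?_ ?_
  · exact (Measurable.aestronglyMeasurable (by fun_prop))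
  · filter_upwards [ae_restrict_mem measurableSet_Ioi] with r hr
    have hr' : 0 < r := hr
    have : 0 < max r s := lt_max_of_lt_left hr'
    rw [Real.norm_of_nonneg (by positivity), div_eq_mul_inv, mul_comm]
    simp only [neg_mul, one_mul]
    gcongr
    exact le_max_right _ _

lemma aux_radial_limit : Tendsto (fun s : ℝ =>
    (∫ r in Set.Ioi (0:ℝ), Real.exp (-r^2) / max r s) + Real.log s)
    (𝓝[>] 0) (𝓝 (1 - Real.eulerMascheroniConstant / 2)) := by
  have h := (aux_avg.add aux_tail).add aux_log_small
  have e : 1 + -Real.eulerMascheroniConstant / 2 + 0 = 1 - Real.eulerMascheroniConstant / 2 := by ring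
  rw [e] at h
  refine h.congr' ?_
  filter_upwards [self_mem_nhdsWithin] with s hs
  have hs' : 0 < s := hs
  have hi := aux_radial_int s hs'
  rw [← Set.Ioc_union_Ioi_eq_Ioi hs'.le] at hi ⊢
  rw [setIntegral_union (Set.Ioc_disjoint_Ioi le_rfl) measurableSet_Ioi
    (hi.mono_set Set.subset_union_left) (hi.mono_set Set.subset_union_right)]
  have e1 : ∫ r in Set.Ioc 0 s, Real.exp (-r^2) / max r s
      = ∫ r in Set.Ioc 0 s, Real.exp (-r^2) / s :=
    setIntegral_congr_fun measurableSet_Ioc fun r hr => by simp only [max_eq_right hr.2]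
  have e2 : ∫ r in Set.Ioi s, Real.exp (-r^2) / max r s
      = ∫ r in Set.Ioi s, Real.exp (-r^2) / r :=
    setIntegral_congr_fun measurableSet_Ioi fun r hr => by
      simp only [max_eq_left (le_of_lt (show s < r from hr))]
  rw [e1, e2, aux_parts s hs']
  ring

/-- Angular integral. -/
lemma aux_angle (r s : ℝ) (hr : 0 < r) (hs : 0 < s) :
    ∫⁻ θ in Set.Ioo 0 π, ENNReal.ofReal (Real.sin θ / √(r^2 + s^2 - 2*r*s*Real.cos θ))
      = ENNReal.ofReal (2 / max r s) := by
  have hpos : ∀ θ ∈ Set.Ioo 0 π, 0 < r^2 + s^2 - 2*r*s*Real.cos θ := by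
    intro θ hθ
    have h1 : Real.cos θ < 1 := by
      rw [← Real.cos_zero]
      exact Real.cos_lt_cos_of_nonneg_of_le_pi le_rfl hθ.2.le hθ.1
    nlinarith [sq_nonneg (r - s), mul_pos (mul_pos hr hs) (sub_pos.2 h1)]
  have hnn : ∀ θ ∈ Set.Ioo 0 π, 0 ≤ Real.sin θ / √(r^2 + s^2 - 2*r*s*Real.cos θ) := by
    intro θ hθ
    have := Real.sin_pos_of_pos_of_lt_pi hθ.1 hθ.2
    positivity
  have hcont : ContinuousOn (fun θ => √(r^2 + s^2 - 2*r*s*Real.cos θ) / (r*s)) (Set.Icc 0 π) := by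
    apply Continuous.continuousOn
    fun_prop
  have hder : ∀ θ ∈ Set.Ioo 0 π, HasDerivAt (fun θ => √(r^2 + s^2 - 2*r*s*Real.cos θ) / (r*s))
      (Real.sin θ / √(r^2 + s^2 - 2*r*s*Real.cos θ)) θ := by
    intro θ hθ
    have h1 : HasDerivAt (fun θ => r^2 + s^2 - 2*r*s*Real.cos θ) (2*r*s*Real.sin θ) θ := by
      refine (((Real.hasDerivAt_cos θ).const_mul (2*r*s)).const_sub (r^2+s^2)).congr_deriv ?_
      ring
    refine ((h1.sqrt (hpos θ hθ).ne').div_const (r*s)).congr_deriv ?_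
    have := Real.sqrt_pos.2 (hpos θ hθ)
    field_simp
  have hint := intervalIntegral.integrableOn_deriv_of_nonneg hcont hder hnn
  have hval := intervalIntegral.integral_eq_sub_of_hasDerivAt_of_le Real.pi_pos.le hcont hder
    ((intervalIntegrable_iff_integrableOn_Ioc_of_le Real.pi_pos.le).2 hint)
  rw [← ofReal_integral_eq_lintegral_ofReal (hint.mono_set Set.Ioo_subset_Ioc_self)
    ((ae_restrict_iff' measurableSet_Ioo).2 (Eventually.of_forall hnn)),
    ← integral_Ioc_eq_integral_Ioo, ← intervalIntegral.integral_of_le Real.pi_pos.le, hval]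
  congr 1
  have e1 : r^2 + s^2 - 2*r*s*Real.cos π = (r+s)^2 := by rw [Real.cos_pi]; ring
  have e2 : r^2 + s^2 - 2*r*s*Real.cos 0 = (r-s)^2 := by rw [Real.cos_zero]; ring
  rw [e1, e2, Real.sqrt_sq (by positivity), Real.sqrt_sq_eq_abs]
  rcases le_total r s with h | h
  · rw [max_eq_right h, abs_of_nonpos (by linarith)]
    field_simp
    ring
  · rw [max_eq_left h, abs_of_nonneg (by linarith)]
    field_simp
    ring

/-- Polar integration of a function of the radius. -/
lemma aux_polar_radial (g : ℝ → ENNReal) (hg : Measurable g) :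
    ∫⁻ p : ℝ × ℝ, g (p.1^2 + p.2^2) = ENNReal.ofReal (2*π) *
      ∫⁻ ρ in Set.Ioi (0:ℝ), ENNReal.ofReal ρ * g (ρ^2) := by
  rw [← lintegral_comp_polarCoord_symm]
  have ht : polarCoord.target = Set.Ioi (0 : ℝ) ×ˢ Set.Ioo (-π) π := rfl
  rw [ht, Measure.volume_eq_prod, ← Measure.prod_restrict]
  have e : ∀ p : ℝ × ℝ, ENNReal.ofReal p.1 • g ((polarCoord.symm p).1^2 + (polarCoord.symm p).2^2)
      = (fun ρ => ENNReal.ofReal ρ * g (ρ^2)) p.1 * (fun _ : ℝ => (1:ENNReal)) p.2 := by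
    intro p
    have : (p.1 * Real.cos p.2)^2 + (p.1 * Real.sin p.2)^2 = p.1^2 := by
      have := Real.sin_sq_add_cos_sq p.2
      linear_combination p.1^2 * this
    simp [polarCoord_symm_apply, this]
  rw [lintegral_congr e, lintegral_prod_mul (f := fun ρ : ℝ => ENNReal.ofReal ρ * g (ρ^2))
    (g := fun _ : ℝ => (1:ENNReal)) (by fun_prop) (by fun_prop), mul_comm]
  congr 1
  rw [lintegral_one, Measure.restrict_apply_univ, Real.volume_Ioo]
  congr 1
  ring

/-- Half-plane polar integration. -/
lemma aux_polar_half (G : ℝ × ℝ → ENNReal) (hG : Measurable G) :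
    ∫⁻ z : ℝ, ∫⁻ ρ in Set.Ioi (0:ℝ), G (z, ρ) =
      ∫⁻ r in Set.Ioi (0:ℝ), ∫⁻ θ in Set.Ioo 0 π,
        ENNReal.ofReal r * G (r * Real.cos θ, r * Real.sin θ) := by
  have hS : MeasurableSet {p : ℝ × ℝ | 0 < p.2} := measurableSet_lt measurable_const measurable_snd
  have h1 : ∫⁻ z : ℝ, ∫⁻ ρ in Set.Ioi (0:ℝ), G (z, ρ) =
      ∫⁻ p : ℝ × ℝ, {p : ℝ × ℝ | 0 < p.2}.indicator G p := by
    rw [Measure.volume_eq_prod, lintegral_prod _ (hG.indicator hS).aemeasurable]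
    refine lintegral_congr fun z => ?_
    rw [← lintegral_indicator measurableSet_Ioi]
    rfl
  rw [h1, ← lintegral_comp_polarCoord_symm]
  have ht : polarCoord.target = Set.Ioi (0 : ℝ) ×ˢ Set.Ioo (-π) π := rfl
  have hm : Measurable fun p : ℝ × ℝ => (p.1 * Real.cos p.2, p.1 * Real.sin p.2) := by fun_prop
  rw [ht, Measure.volume_eq_prod, ← Measure.prod_restrict]
  simp only [polarCoord_symm_apply, smul_eq_mul]
  rw [lintegral_prod]
  swap
  · exact (Measurable.mul (by fun_prop) ((hG.indicator hS).comp hm)).aemeasurable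
  refine setLIntegral_congr_fun measurableSet_Ioi fun r hr => ?_
  have hr' : 0 < r := hr
  dsimp only
  rw [← lintegral_indicator measurableSet_Ioo, ← lintegral_indicator measurableSet_Ioo]
  refine lintegral_congr fun θ => ?_
  by_cases h : θ ∈ Set.Ioo 0 π
  · rw [Set.indicator_of_mem h, Set.indicator_of_mem (show θ ∈ Set.Ioo (-π) π from
      ⟨by linarith [h.1, Real.pi_pos], h.2⟩), Set.indicator_of_mem]
    exact mul_pos hr' (Real.sin_pos_of_pos_of_lt_pi h.1 h.2)
  · rw [Set.indicator_of_notMem h]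
    by_cases h' : θ ∈ Set.Ioo (-π) π
    · rw [Set.indicator_of_mem h', Set.indicator_of_notMem, mul_zero]
      have : θ ≤ 0 := by
        by_contra hc
        exact h ⟨not_le.1 hc, h'.2⟩
      have := Real.sin_nonpos_of_nonpos_of_neg_pi_le this h'.1.le
      simp only [Set.mem_ofPred_eq, not_lt]
      nlinarith
    · rw [Set.indicator_of_notMem h']

lemma aux_coords (F : ℝ → ℝ → ENNReal) (hF : Measurable (Function.uncurry F)) (s : ℝ) :
    ∫⁻ x : EuclideanSpace ℝ (Fin 3), F (‖x‖^2) (‖EuclideanSpace.single 0 s - x‖^2) =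
    ∫⁻ z : ℝ, ∫⁻ p : ℝ × ℝ, F (z^2 + (p.1^2 + p.2^2)) ((s - z)^2 + (p.1^2 + p.2^2)) := by
  have hF' : ∀ {α : Type} [MeasurableSpace α] (u v : α → ℝ), Measurable u → Measurable v →
    Measurable fun a => F (u a) (v a) := fun u v hu hv => hF.comp (hu.prodMk hv)
  have m1 := PiLp.volume_preserving_ofLp (Fin 3)
  have m2 := volume_preserving_piFinSuccAbove (fun _ : Fin 3 => ℝ) 0
  have m3 : MeasurePreserving (Prod.map id (@MeasurableEquiv.finTwoArrow ℝ _))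
      (volume : Measure (ℝ × (Fin 2 → ℝ))) (volume : Measure (ℝ × ℝ × ℝ)) :=
    (MeasurePreserving.id volume).prod (volume_preserving_finTwoArrow ℝ)
  have m := m3.comp (m2.comp m1)
  have hm : Measurable fun q : ℝ × ℝ × ℝ =>
      F (q.1^2 + (q.2.1^2 + q.2.2^2)) ((s - q.1)^2 + (q.2.1^2 + q.2.2^2)) :=
    hF' _ _ (by fun_prop) (by fun_prop)
  have h := m.lintegral_comp hm
  rw [Measure.volume_eq_prod, lintegral_prod _ hm.aemeasurable] at h
  rw [← h]
  refine lintegral_congr fun x => ?_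
  rw [EuclideanSpace.real_norm_sq_eq, EuclideanSpace.real_norm_sq_eq]
  simp [Fin.sum_univ_three, MeasurableEquiv.piFinSuccAbove, add_assoc]
  rfl

lemma aux_axis (s : ℝ) (hs : 0 < s) :
    ∫⁻ x : EuclideanSpace ℝ (Fin 3), ENNReal.ofReal
      (Real.exp (-‖x‖ ^ 2) / (‖x‖ ^ 2 * ‖EuclideanSpace.single 0 s - x‖)) =
    ENNReal.ofReal (4 * π * ∫ r in Set.Ioi (0:ℝ), Real.exp (-r^2) / max r s) := by
  let F : ℝ → ℝ → ENNReal := fun A B => ENNReal.ofReal (Real.exp (-A) / (A * √B))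
  have hF : Measurable (Function.uncurry F) := by
    unfold F Function.uncurry
    fun_prop
  have hF' : ∀ {α : Type} [MeasurableSpace α] (u v : α → ℝ), Measurable u → Measurable v →
    Measurable fun a => F (u a) (v a) := fun u v hu hv => hF.comp (hu.prodMk hv)
  have h1 : ∀ x : EuclideanSpace ℝ (Fin 3), ENNReal.ofReal
      (Real.exp (-‖x‖ ^ 2) / (‖x‖ ^ 2 * ‖EuclideanSpace.single 0 s - x‖)) =
      F (‖x‖^2) (‖EuclideanSpace.single 0 s - x‖^2) := by
    intro x
    simp only [F, Real.sqrt_sq (norm_nonneg _)]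
  have h2 : ∀ z : ℝ, ∫⁻ p : ℝ × ℝ, F (z^2 + (p.1^2 + p.2^2)) ((s - z)^2 + (p.1^2 + p.2^2)) =
      ENNReal.ofReal (2*π) * ∫⁻ ρ in Set.Ioi (0:ℝ),
        (fun q : ℝ × ℝ => ENNReal.ofReal q.2 * F (q.1^2 + q.2^2) ((s-q.1)^2 + q.2^2)) (z, ρ) :=
    fun z => aux_polar_radial (fun t => F (z^2 + t) ((s-z)^2 + t))
      (hF' _ _ (by fun_prop) (by fun_prop))
  rw [lintegral_congr h1, aux_coords F hF, lintegral_congr h2,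
    lintegral_const_mul' _ _ ENNReal.ofReal_ne_top, aux_polar_half (fun q : ℝ × ℝ =>
      ENNReal.ofReal q.2 * F (q.1^2 + q.2^2) ((s-q.1)^2 + q.2^2))]
  swap
  · exact Measurable.mul (by fun_prop) (hF' _ _ (by fun_prop) (by fun_prop))
  have h3 : ∀ r ∈ Set.Ioi (0:ℝ), ∫⁻ θ in Set.Ioo 0 π, ENNReal.ofReal r *
      (fun q : ℝ × ℝ => ENNReal.ofReal q.2 * F (q.1^2 + q.2^2) ((s-q.1)^2 + q.2^2))
        (r * Real.cos θ, r * Real.sin θ) = ENNReal.ofReal (2 * (Real.exp (-r^2) / max r s)) := by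
    intro r hr
    have hr' : 0 < r := hr
    have e : ∀ θ ∈ Set.Ioo 0 π, ENNReal.ofReal r *
      (fun q : ℝ × ℝ => ENNReal.ofReal q.2 * F (q.1^2 + q.2^2) ((s-q.1)^2 + q.2^2))
        (r * Real.cos θ, r * Real.sin θ) = ENNReal.ofReal (Real.exp (-r^2)) *
        ENNReal.ofReal (Real.sin θ / √(r^2 + s^2 - 2*r*s*Real.cos θ)) := by
      intro θ hθ
      have hsin := Real.sin_pos_of_pos_of_lt_pi hθ.1 hθ.2
      have hsc := Real.sin_sq_add_cos_sq θ
      have e1 : (r * Real.cos θ)^2 + (r * Real.sin θ)^2 = r^2 := by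
        linear_combination r^2 * hsc
      have e2 : (s - r * Real.cos θ)^2 + (r * Real.sin θ)^2
          = r^2 + s^2 - 2*r*s*Real.cos θ := by
        linear_combination r^2 * hsc
      simp only [F, e1, e2]
      rw [← ENNReal.ofReal_mul (by positivity), ← ENNReal.ofReal_mul (by positivity),
        ← ENNReal.ofReal_mul (by positivity)]
      congr 1
      simp only [div_eq_mul_inv, mul_inv]
      field_simp
    rw [setLIntegral_congr_fun measurableSet_Ioo e,
      lintegral_const_mul' _ _ ENNReal.ofReal_ne_top, aux_angle r s hr' hs,
      ← ENNReal.ofReal_mul (by positivity)]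
    congr 1
    ring
  have hi := (aux_radial_int s hs).const_mul 2
  rw [setLIntegral_congr_fun measurableSet_Ioi h3, ← ofReal_integral_eq_lintegral_ofReal hi,
    ← ENNReal.ofReal_mul (by positivity), integral_const_mul]
  · congr 1
    ring
  · filter_upwards [ae_restrict_mem measurableSet_Ioi] with r hr
    have hr' : 0 < r := hr
    have : 0 < max r s := lt_max_of_lt_left hr'
    simp only [Pi.zero_apply]
    positivity

lemma aux_formula (a : EuclideanSpace ℝ (Fin 3)) (ha : a ≠ 0) :
    ∫ x : EuclideanSpace ℝ (Fin 3), Real.exp (-‖x‖ ^ 2) / (‖x‖ ^ 2 * ‖a - x‖) =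
    4 * π * ∫ r in Set.Ioi (0:ℝ), Real.exp (-r^2) / max r ‖a‖ := by
  have hs : 0 < ‖a‖ := norm_pos_iff.2 ha
  set b : EuclideanSpace ℝ (Fin 3) := EuclideanSpace.single 0 ‖a‖ with hb
  have hn : ‖b‖ = ‖a‖ := by simp [hb]
  let R := Submodule.reflection (Submodule.span ℝ {b - a})ᗮ
  have hR : R b = a := Submodule.reflection_sub hn
  have hcomp : ∫ x : EuclideanSpace ℝ (Fin 3), Real.exp (-‖x‖ ^ 2) / (‖x‖ ^ 2 * ‖a - x‖) =
      ∫ x : EuclideanSpace ℝ (Fin 3), Real.exp (-‖x‖ ^ 2) / (‖x‖ ^ 2 * ‖b - x‖) := by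
    rw [← R.measurePreserving.integral_comp' (f := R.toMeasurableEquiv)]
    refine integral_congr_ae (Eventually.of_forall fun x => ?_)
    have : a - R x = R (b - x) := by rw [map_sub, hR]
    simp only [LinearIsometryEquiv.coe_toMeasurableEquiv, this, LinearIsometryEquiv.norm_map]
  rw [hcomp, integral_eq_lintegral_of_nonneg_ae, aux_axis ‖a‖ hs, ENNReal.toReal_ofReal]
  · refine mul_nonneg (by positivity) (setIntegral_nonneg measurableSet_Ioi fun r hr => ?_)
    have hr' : 0 < r := hr
    have : 0 < max r ‖a‖ := lt_max_of_lt_left hr'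
    positivity
  · exact Eventually.of_forall fun x => by simp only [Pi.zero_apply]; positivity
  · exact Measurable.aestronglyMeasurable (by fun_prop)

theorem coulomb_log_singularity :
    Tendsto
      (fun a : EuclideanSpace ℝ (Fin 3) =>
        (∫ x : EuclideanSpace ℝ (Fin 3),
            Real.exp (-‖x‖ ^ 2) / (‖x‖ ^ 2 * ‖a - x‖)) + 4 * π * Real.log ‖a‖)
      (𝓝[≠] 0)
      (𝓝 (4 * π - 2 * π * Real.eulerMascheroniConstant)) := by
  have h := (aux_radial_limit.comp (tendsto_norm_nhdsNE_zero
    (E := EuclideanSpace ℝ (Fin 3)))).const_mul (4 * π)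
  have e : 4 * π * (1 - Real.eulerMascheroniConstant / 2)
      = 4 * π - 2 * π * Real.eulerMascheroniConstant := by ring
  rw [e] at h
  refine h.congr' ?_
  filter_upwards [self_mem_nhdsWithin] with a ha
  rw [aux_formula a ha]
  simp only [Function.comp]
  ring
end

section
/- For every a > 0 and every γ ∈ ℝ, ∫_0^∞ e^{-a t²} sinh(γ t) / t dt = √π · e^{γ²/(4a)} · F(γ/(2√a)), where F is the Dawson function. -/
open Real MeasureTheory

/-- The Dawson function `F(s) = e^{-s²} ∫_0^s e^{u²} du`. -/
noncomputable def dawson (s : ℝ) : ℝ :=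
  Real.exp (-s ^ 2) * ∫ u in (0 : ℝ)..s, Real.exp (u ^ 2)


lemma gsi_quad_eq (a : ℝ) (ha : 0 < a) (x t : ℝ) :
    Real.exp (-a * t ^ 2) * Real.exp (x * t)
      = Real.exp (x ^ 2 / (4 * a)) * Real.exp (-a * (t - x / (2 * a)) ^ 2) := by
  rw [← Real.exp_add, ← Real.exp_add]
  congr 1
  field_simp
  ring

lemma gsi_integrable (a : ℝ) (ha : 0 < a) (x : ℝ) :
    Integrable (fun t : ℝ => Real.exp (-a * t ^ 2) * Real.exp (x * t)) := by
  simp_rw [gsi_quad_eq a ha]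
  exact ((integrable_exp_neg_mul_sq ha).comp_sub_right (x / (2 * a))).const_mul _

lemma gsi_integral (a : ℝ) (ha : 0 < a) (x : ℝ) :
    ∫ t : ℝ, Real.exp (-a * t ^ 2) * Real.exp (x * t)
      = Real.exp (x ^ 2 / (4 * a)) * Real.sqrt (π / a) := by
  simp_rw [gsi_quad_eq a ha]
  rw [integral_const_mul,
    integral_sub_right_eq_self (fun t : ℝ => Real.exp (-a * t ^ 2)) (x / (2 * a)),
    integral_gaussian]

lemma gsi_cosh_eq (a x t : ℝ) : Real.exp (-a * t ^ 2) * Real.cosh (x * t)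
    = (Real.exp (-a * t ^ 2) * Real.exp (x * t)
      + Real.exp (-a * t ^ 2) * Real.exp (-x * t)) / 2 := by
  rw [Real.cosh_eq, neg_mul x t]; ring

lemma gsi_cosh_integrable (a : ℝ) (ha : 0 < a) (x : ℝ) :
    Integrable (fun t : ℝ => Real.exp (-a * t ^ 2) * Real.cosh (x * t)) := by
  simp_rw [gsi_cosh_eq]
  exact ((gsi_integrable a ha x).add (gsi_integrable a ha (-x))).div_const 2

lemma gsi_cosh_integral (a : ℝ) (ha : 0 < a) (x : ℝ) :
    ∫ t in Set.Ioi (0 : ℝ), Real.exp (-a * t ^ 2) * Real.cosh (x * t)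
      = Real.sqrt (π / a) / 2 * Real.exp (x ^ 2 / (4 * a)) := by
  have h1 : ∫ t : ℝ, Real.exp (-a * t ^ 2) * Real.cosh (x * t)
      = Real.exp (x ^ 2 / (4 * a)) * Real.sqrt (π / a) := by
    simp_rw [gsi_cosh_eq]
    rw [integral_div, integral_add (gsi_integrable a ha x) (gsi_integrable a ha (-x)),
      gsi_integral a ha, gsi_integral a ha, neg_sq]
    ring
  have h2 := integral_comp_abs (f := fun t : ℝ => Real.exp (-a * t ^ 2) * Real.cosh (x * t))
  have h3 : ∀ t : ℝ, Real.cosh (x * |t|) = Real.cosh (x * t) := by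
    intro t
    rw [← Real.cosh_abs (x * t), ← Real.cosh_abs (x * |t|), abs_mul, abs_mul, abs_abs]
  simp only [sq_abs, h3] at h2
  rw [h1] at h2
  linarith

lemma gsi_sinh (γ t : ℝ) (ht : t ≠ 0) :
    ∫ x in (0 : ℝ)..γ, Real.cosh (x * t) = Real.sinh (γ * t) / t := by
  rw [intervalIntegral.integral_comp_mul_right (fun y => Real.cosh y) ht]
  rw [intervalIntegral.integral_eq_sub_of_hasDerivAt (f := Real.sinh)
    (fun y _ => Real.hasDerivAt_sinh y) (Real.continuous_cosh.intervalIntegrable _ _)]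
  simp [div_eq_inv_mul]

theorem gaussian_sinh_integral (a : ℝ) (ha : 0 < a) (γ : ℝ) :
    ∫ t in Set.Ioi (0 : ℝ), Real.exp (-a * t ^ 2) * Real.sinh (γ * t) / t
      = Real.sqrt π * Real.exp (γ ^ 2 / (4 * a)) * dawson (γ / (2 * Real.sqrt a)) := by
  have hs : 0 < Real.sqrt a := Real.sqrt_pos.2 ha
  have hsq : Real.sqrt a ^ 2 = a := Real.sq_sqrt ha.le
  have e1 : ∫ t in Set.Ioi (0 : ℝ), Real.exp (-a * t ^ 2) * Real.sinh (γ * t) / t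
      = ∫ t in Set.Ioi (0 : ℝ), ∫ x in (0 : ℝ)..γ, Real.exp (-a * t ^ 2) * Real.cosh (x * t) := by
    refine setIntegral_congr_fun measurableSet_Ioi fun t ht => ?_
    simp only [intervalIntegral.integral_const_mul]
    rw [gsi_sinh γ t (ne_of_gt ht), mul_div_assoc]
  have hint : Integrable (Function.uncurry
      fun (x t : ℝ) => Real.exp (-a * t ^ 2) * Real.cosh (x * t))
      ((volume.restrict (Set.uIoc 0 γ)).prod (volume.restrict (Set.Ioi (0 : ℝ)))) := by
    have hb : Integrable (fun p : ℝ × ℝ => (1 : ℝ) * (Real.exp (-a * p.2 ^ 2) * Real.cosh (γ * p.2)))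
        ((volume.restrict (Set.uIoc 0 γ)).prod (volume.restrict (Set.Ioi (0 : ℝ)))) := by
      refine Integrable.mul_prod (f := fun _ : ℝ => (1 : ℝ))
        (g := fun t : ℝ => Real.exp (-a * t ^ 2) * Real.cosh (γ * t)) ?_
        (gsi_cosh_integrable a ha γ).integrableOn
      rw [Set.uIoc]
      exact integrable_const _
    refine hb.mono' ?_ ?_
    · apply Continuous.aestronglyMeasurable
      unfold Function.uncurry
      fun_prop
    · rw [Measure.prod_restrict]
      filter_upwards [ae_restrict_mem (measurableSet_uIoc.prod measurableSet_Ioi)] with p hp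
      obtain ⟨h1, -⟩ := hp
      have hx : |p.1| ≤ |γ| := by
        have := Set.abs_sub_left_of_mem_uIcc (Set.uIoc_subset_uIcc h1)
        simpa using this
      simp only [Function.uncurry, one_mul]
      rw [Real.norm_of_nonneg (mul_nonneg (Real.exp_pos _).le (Real.cosh_pos _).le)]
      refine mul_le_mul_of_nonneg_left ?_ (Real.exp_pos _).le
      rw [Real.cosh_le_cosh, abs_mul, abs_mul]
      exact mul_le_mul_of_nonneg_right hx (abs_nonneg _)
  rw [e1, ← intervalIntegral_integral_swap hint]
  simp_rw [gsi_cosh_integral a ha]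
  rw [intervalIntegral.integral_const_mul]
  have e2 : ∀ x : ℝ, Real.exp (x ^ 2 / (4 * a)) = Real.exp ((x / (2 * Real.sqrt a)) ^ 2) := by
    intro x
    rw [div_pow, mul_pow, hsq]; norm_num
  simp_rw [e2]
  rw [intervalIntegral.integral_comp_div (fun u => Real.exp (u ^ 2)) (by positivity), dawson,
    Real.exp_neg, Real.sqrt_div Real.pi_pos.le]
  have := Real.exp_pos ((γ / (2 * Real.sqrt a)) ^ 2)
  simp only [zero_div, smul_eq_mul]
  field_simp
end

section
/- Let a > 0 and b, d ∈ ℝ, and set v := (b - d)/√(2a) and w := (b + d)/√(2a). Then ∫_0^∞ e^{-a t²} · (cosh((b + d)t) - cosh((b - d)t)) · t^{-2} dt = √(aπ)·(e^{v²/2} - e^{w²/2}) + √(2πa)·( w e^{w²/2} F(w/√2) - v e^{v²/2} F(v/√2) ), where F is the Dawson function. -/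
open Real MeasureTheory

lemma aux_exp_integrable (a c : ℝ) (ha : 0 < a) :
    Integrable (fun t : ℝ => Real.exp (-a * t ^ 2) * Real.exp (c * t)) ∧
    ∫ t : ℝ, Real.exp (-a * t ^ 2) * Real.exp (c * t) = √(π / a) * Real.exp (c ^ 2 / (4 * a)) := by
  have h : (fun t : ℝ => Real.exp (-a * t ^ 2) * Real.exp (c * t)) =
      fun t : ℝ => Real.exp (-a * (t - c / (2 * a)) ^ 2) * Real.exp (c ^ 2 / (4 * a)) := by
    funext t
    rw [← Real.exp_add, ← Real.exp_add]
    congr 1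
    field_simp
    ring
  rw [h]
  constructor
  · exact ((integrable_exp_neg_mul_sq ha).comp_sub_right (c / (2 * a))).mul_const _
  · rw [integral_mul_const, integral_sub_right_eq_self (fun t : ℝ => Real.exp (-a * t ^ 2)),
      integral_gaussian]

lemma aux_cosh (a c : ℝ) (ha : 0 < a) :
    Integrable (fun t : ℝ => Real.exp (-a * t ^ 2) * Real.cosh (c * t)) ∧
    ∫ t in Set.Ioi (0 : ℝ), Real.exp (-a * t ^ 2) * Real.cosh (c * t)
      = √(π / a) / 2 * Real.exp (c ^ 2 / (4 * a)) := by
  obtain ⟨h1, h2⟩ := aux_exp_integrable a c ha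
  obtain ⟨h3, h4⟩ := aux_exp_integrable a (-c) ha
  have h : (fun t : ℝ => Real.exp (-a * t ^ 2) * Real.cosh (c * t)) =
      fun t : ℝ => (Real.exp (-a * t ^ 2) * Real.exp (c * t) +
        Real.exp (-a * t ^ 2) * Real.exp (-c * t)) / 2 := by
    funext t
    rw [Real.cosh_eq, neg_mul c t]
    ring
  have hi : ∫ t : ℝ, Real.exp (-a * t ^ 2) * Real.cosh (c * t)
      = √(π / a) * Real.exp (c ^ 2 / (4 * a)) := by
    rw [h, integral_div, integral_add h1 h3, h2, h4, neg_sq]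
    ring
  refine ⟨by rw [h]; exact (h1.add h3).div_const 2, ?_⟩
  have h5 := integral_comp_abs (f := fun t : ℝ => Real.exp (-a * t ^ 2) * Real.cosh (c * t))
  have h6 : (fun t : ℝ => Real.exp (-a * |t| ^ 2) * Real.cosh (c * |t|)) =
      fun t : ℝ => Real.exp (-a * t ^ 2) * Real.cosh (c * t) := by
    funext t
    rw [sq_abs, ← Real.cosh_abs (c * |t|), ← Real.cosh_abs (c * t), abs_mul, abs_mul, abs_abs]
  simp only [h6] at h5
  rw [hi] at h5
  linarith

lemma aux_inner (c t : ℝ) (ht : t ≠ 0) :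
    ∫ s in (0 : ℝ)..1, c ^ 2 * (1 - s) * Real.cosh (c * s * t) =
      (Real.cosh (c * t) - 1) * t ^ (-2 : ℤ) := by
  have hd : ∀ s ∈ Set.uIcc (0 : ℝ) 1, HasDerivAt
      (fun s : ℝ => (1 - s) * c * Real.sinh (c * s * t) / t + Real.cosh (c * s * t) / t ^ 2)
      (c ^ 2 * (1 - s) * Real.cosh (c * s * t)) s := by
    intro s _
    have h0 : HasDerivAt (fun s : ℝ => c * s * t) (c * t) s := by
      simpa using ((hasDerivAt_id s).const_mul c).mul_const t
    have h1 : HasDerivAt (fun s : ℝ => (1 - s) * c) (-c) s := by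
      simpa using ((hasDerivAt_id s).const_sub 1).mul_const c
    refine (((h1.mul h0.sinh).div_const t).add (h0.cosh.div_const (t ^ 2))).congr_deriv ?_
    have h2 : c * s * t = s * (c * t) := by ring
    have h3 : (t ^ 2)⁻¹ = t⁻¹ * t⁻¹ := by rw [sq, mul_inv]
    have h4 : t * t⁻¹ = 1 := mul_inv_cancel₀ ht
    simp only [div_eq_mul_inv, h3]
    linear_combination ((c ^ 2 * (1 - s) * Real.cosh (c * s * t)) +
      c * Real.sinh (c * s * t) * t⁻¹) * h4
  rw [intervalIntegral.integral_eq_sub_of_hasDerivAt hd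
    (Continuous.intervalIntegrable (by fun_prop) _ _)]
  simp [zpow_neg]
  field_simp

lemma aux_int (a c : ℝ) (ha : 0 < a) :
    IntegrableOn (fun t : ℝ => Real.exp (-a * t ^ 2) * ((Real.cosh (c * t) - 1) * t ^ (-2 : ℤ)))
      (Set.Ioi 0) ∧
    ∫ t in Set.Ioi (0 : ℝ), Real.exp (-a * t ^ 2) * ((Real.cosh (c * t) - 1) * t ^ (-2 : ℤ))
      = ∫ s in (0 : ℝ)..1, c ^ 2 * (1 - s) * (√(π / a) / 2 * Real.exp ((c * s) ^ 2 / (4 * a))) := by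
  let f : ℝ → ℝ → ℝ := fun t s =>
    Real.exp (-a * t ^ 2) * (c ^ 2 * (1 - s) * Real.cosh (c * s * t))
  have hf : Integrable (Function.uncurry f)
      ((volume.restrict (Set.Ioi (0 : ℝ))).prod (volume.restrict (Set.Ioc (0 : ℝ) 1))) := by
    have hg : Integrable (fun z : ℝ × ℝ => (Real.exp (-a * z.1 ^ 2) * Real.cosh (c * z.1)) * c ^ 2)
      ((volume.restrict (Set.Ioi (0 : ℝ))).prod (volume.restrict (Set.Ioc (0 : ℝ) 1))) :=
      Integrable.mul_prod (f := fun t : ℝ => Real.exp (-a * t ^ 2) * Real.cosh (c * t))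
        (g := fun _ : ℝ => c ^ 2) (aux_cosh a c ha).1.integrableOn
        (integrable_const _)
    refine hg.mono' ?_ ?_
    · apply Continuous.aestronglyMeasurable
      simp only [f, Function.uncurry_def]
      fun_prop
    · rw [Measure.prod_restrict]
      filter_upwards [ae_restrict_mem (measurableSet_Ioi.prod measurableSet_Ioc)] with z hz
      obtain ⟨h1, h2, h3⟩ := hz
      simp only [f, Function.uncurry_def]
      have h4 : Real.cosh (c * z.2 * z.1) ≤ Real.cosh (c * z.1) := by
        rw [Real.cosh_le_cosh, abs_mul, abs_mul, abs_mul, abs_of_pos h2]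
        have : |c| * z.2 ≤ |c| := mul_le_of_le_one_right (abs_nonneg _) h3
        gcongr
      have h5 : 0 < Real.cosh (c * z.2 * z.1) := Real.cosh_pos _
      have h6 : 0 ≤ 1 - z.2 := by linarith
      rw [Real.norm_of_nonneg (by positivity), mul_assoc (c ^ 2), mul_assoc (Real.exp _)]
      apply mul_le_mul_of_nonneg_left _ (Real.exp_pos _).le
      rw [mul_comm (Real.cosh (c * z.1))]
      apply mul_le_mul_of_nonneg_left _ (sq_nonneg c)
      nlinarith
  have hin : ∀ t ∈ Set.Ioi (0 : ℝ), ∫ s in Set.Ioc (0 : ℝ) 1, f t s =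
      Real.exp (-a * t ^ 2) * ((Real.cosh (c * t) - 1) * t ^ (-2 : ℤ)) := by
    intro t ht
    simp only [f]
    rw [integral_const_mul, ← intervalIntegral.integral_of_le zero_le_one,
      aux_inner c t (ne_of_gt ht)]
  constructor
  · exact IntegrableOn.congr_fun (s := Set.Ioi (0 : ℝ)) hf.integral_prod_left hin
      measurableSet_Ioi
  · rw [← setIntegral_congr_fun measurableSet_Ioi hin, integral_integral_swap hf,
      intervalIntegral.integral_of_le zero_le_one]
    congr 1
    funext s
    rw [← (aux_cosh a (c * s) ha).2, ← integral_const_mul]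
    congr 1
    funext t
    simp only [f]
    ring

lemma aux_eval (a w : ℝ) (ha : 0 < a) :
    ∫ s in (0 : ℝ)..1, (w * √(2 * a)) ^ 2 * (1 - s) *
        (√(π / a) / 2 * Real.exp ((w * √(2 * a) * s) ^ 2 / (4 * a))) =
      √(a * π) - √(a * π) * Real.exp (w ^ 2 / 2) +
        √(2 * π * a) * (w * Real.exp (w ^ 2 / 2) * dawson (w / √2)) := by
  have hs2 : √2 ≠ 0 := by positivity
  have hq : √(2 * a) ^ 2 = 2 * a := Real.sq_sqrt (by positivity)
  have hq2 : √2 ^ 2 = 2 := Real.sq_sqrt (by positivity)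
  have hpa : √(π / a) = √(a * π) / a := by
    rw [show π / a = a * π / a ^ 2 by field_simp, Real.sqrt_div (by positivity),
      Real.sqrt_sq ha.le]
  have h2pa : √(2 * π * a) = √2 * √(a * π) := by
    rw [← Real.sqrt_mul (by positivity)]; congr 1; ring
  have hdaw : Real.exp (w ^ 2 / 2) * dawson (w / √2) =
      ∫ u in (0 : ℝ)..(w / √2), Real.exp (u ^ 2) := by
    rw [dawson, ← mul_assoc, ← Real.exp_add, div_pow, hq2]
    simp
  rw [mul_assoc w, hdaw, h2pa, hpa]
  set E : ℝ → ℝ := fun x => ∫ u in (0 : ℝ)..x, Real.exp (u ^ 2) with hE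
  have hEd : ∀ x, HasDerivAt E (Real.exp (x ^ 2)) x := fun x =>
    (Continuous.integral_hasStrictDerivAt (f := fun u : ℝ => Real.exp (u ^ 2))
      (by fun_prop) 0 x).hasDerivAt
  have hd : ∀ s ∈ Set.uIcc (0 : ℝ) 1, HasDerivAt
      (fun s : ℝ => √(a * π) * (√2 * w * E (w / √2 * s) - Real.exp ((w / √2 * s) ^ 2)))
      ((w * √(2 * a)) ^ 2 * (1 - s) *
        (√(a * π) / a / 2 * Real.exp ((w * √(2 * a) * s) ^ 2 / (4 * a)))) s := by
    intro s _
    have h0 : HasDerivAt (fun s : ℝ => w / √2 * s) (w / √2) s := by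
      simpa using (hasDerivAt_id s).const_mul (w / √2)
    have h1 := (hEd (w / √2 * s)).comp s h0
    have h2 : (w * √(2 * a) * s) ^ 2 / (4 * a) = (w / √2 * s) ^ 2 := by
      rw [mul_pow, mul_pow, hq, mul_pow, div_pow, hq2]
      field_simp
      ring
    rw [h2]
    refine (((h1.const_mul (√2 * w)).sub (h0.pow 2).exp).const_mul (√(a * π))).congr_deriv ?_
    rw [mul_pow w (√(2 * a)), hq]
    have h3 : √2 * (w / √2) = w := by field_simp
    have h4 : (w / √2) * (w / √2) = w ^ 2 / 2 := by rw [← sq, div_pow, hq2]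
    have h5 : w ^ 2 * (2 * a) * (1 - s) * (√(a * π) / a / 2 * Real.exp ((w / √2 * s) ^ 2)) =
      √(a * π) * Real.exp ((w / √2 * s) ^ 2) * (w ^ 2 * (1 - s)) := by field_simp
    rw [h5]
    simp only [Pi.pow_apply, Nat.cast_ofNat, Nat.add_one_sub_one, pow_one]
    linear_combination (√(a * π) * Real.exp ((w / √2 * s) ^ 2) * w) * h3 -
      (2 * √(a * π) * Real.exp ((w / √2 * s) ^ 2) * s) * h4
  rw [intervalIntegral.integral_eq_sub_of_hasDerivAt hd
    (Continuous.intervalIntegrable (by fun_prop) _ _)]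
  have hE0 : E 0 = 0 := by simp [hE]
  simp only [mul_one, mul_zero, hE0, div_pow, hq2]
  simp
  ring

theorem gaussian_cosh_diff_integral (a b d : ℝ) (ha : 0 < a)
    (v w : ℝ) (hv : v = (b - d) / Real.sqrt (2 * a)) (hw : w = (b + d) / Real.sqrt (2 * a)) :
    ∫ t in Set.Ioi (0 : ℝ),
        Real.exp (-a * t ^ 2) * (Real.cosh ((b + d) * t) - Real.cosh ((b - d) * t)) * t ^ (-2 : ℤ)
      = Real.sqrt (a * π) * (Real.exp (v ^ 2 / 2) - Real.exp (w ^ 2 / 2)) +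
          Real.sqrt (2 * π * a) *
            (w * Real.exp (w ^ 2 / 2) * dawson (w / Real.sqrt 2) -
              v * Real.exp (v ^ 2 / 2) * dawson (v / Real.sqrt 2)) := by
  have hq : √(2 * a) ≠ 0 := by positivity
  have hb : b + d = w * √(2 * a) := by rw [hw]; field_simp
  have hb' : b - d = v * √(2 * a) := by rw [hv]; field_simp
  obtain ⟨i1, e1⟩ := aux_int a (w * √(2 * a)) ha
  obtain ⟨i2, e2⟩ := aux_int a (v * √(2 * a)) ha
  rw [aux_eval a w ha] at e1
  rw [aux_eval a v ha] at e2
  rw [hb, hb']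
  have h := integral_sub i1 i2
  rw [e1, e2] at h
  calc _ = _ := by
        congr 1
        funext t
        ring
    _ = _ := h
    _ = _ := by ring
end
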